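/- arXiv:1808.10101 — 11 statements merged into one kernel-verified Lean document; each statement's English description precedes it below -/
import Mathlib

section
/- Gaussian mechanism differential privacy (Theorem 1, per-coordinate form). Let ε ∈ (0,1], δ ∈ (0, 1/100], Δ > 0, and set σ = Δ·√(2·ln(1.25/δ))/ε. Then for any real numbers x, y with |x − y| ≤ Δ and every measurable set O ⊆ ℝ, the Gaussian measures with means x and y and variance σ² satisfy (gaussianReal x σ²)(O) ≤ e^ε · (gaussianReal y σ²)(O) + δ. -/
open ProbabilityTheory MeasureTheory

lemma gm_aux_compare (m₁ m₂ : ℝ) (v : NNReal) (hv : v ≠ 0) (K : ℝ) (hK : 0 ≤ K)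
    (S : Set ℝ) (hS : MeasurableSet S)
    (h' : ∀ t ∈ S, gaussianPDFReal m₁ v t ≤ K * gaussianPDFReal m₂ v t) :
    gaussianReal m₁ v S ≤ ENNReal.ofReal K * gaussianReal m₂ v S := by
  rw [gaussianReal_apply _ hv, gaussianReal_apply _ hv,
    ← lintegral_const_mul _ (measurable_gaussianPDF m₂ v)]
  refine setLIntegral_mono' hS fun t ht => ?_
  rw [gaussianPDF, gaussianPDF, ← ENNReal.ofReal_mul hK]
  exact ENNReal.ofReal_le_ofReal (h' t ht)

lemma gm_aux_pdf (m₁ m₂ : ℝ) (v : NNReal) (k t : ℝ)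
    (h : -(t - m₁) ^ 2 / (2 * v) ≤ k + -(t - m₂) ^ 2 / (2 * v)) :
    gaussianPDFReal m₁ v t ≤ Real.exp k * gaussianPDFReal m₂ v t := by
  unfold gaussianPDFReal
  rw [mul_left_comm, ← Real.exp_add]
  gcongr

lemma gm_aux_neg (m : ℝ) (v : NNReal) (a : ℝ) :
    gaussianReal m v (Set.Iio a) = gaussianReal (-m) v (Set.Ioi (-a)) := by
  rw [← gaussianReal_map_neg, Measure.map_apply measurable_neg measurableSet_Ioi]
  congr 1
  ext t
  simp

lemma gm_aux_add (m : ℝ) (v : NNReal) (a b : ℝ) :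
    gaussianReal (m + b) v (Set.Ioi (a + b)) = gaussianReal m v (Set.Ioi a) := by
  rw [← gaussianReal_map_add_const, Measure.map_apply (by fun_prop) measurableSet_Ioi]
  congr 1
  ext t
  simp

lemma gm_aux_half (m : ℝ) (v : NNReal) :
    gaussianReal m v (Set.Ioi m) ≤ ENNReal.ofReal (1 / 2) := by
  have h1 : gaussianReal m v (Set.Iio m) = gaussianReal m v (Set.Ioi m) := by
    rw [gm_aux_neg, ← gm_aux_add (-m) v (-m) (2 * m)]
    congr 2 <;> ring_nf
  have h2 : gaussianReal m v (Set.Iio m) + gaussianReal m v (Set.Ioi m) ≤ 1 := by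
    rw [← measure_union _ measurableSet_Ioi]
    · exact prob_le_one
    · rw [Set.disjoint_left]
      intro t ht ht'
      exact lt_asymm (Set.mem_Iio.1 ht) (Set.mem_Ioi.1 ht')
  rw [h1, ← two_mul] at h2
  rw [one_div, ENNReal.ofReal_inv_of_pos (by norm_num)]
  simpa using (ENNReal.le_inv_iff_mul_le.2 (by rwa [mul_comm] at h2))

lemma gm_aux_tail (m : ℝ) (v : NNReal) (hv : v ≠ 0) (θ : ℝ) (hθ : 0 ≤ θ) :
    gaussianReal m v (Set.Ioi (m + θ)) ≤
      ENNReal.ofReal (Real.exp (-θ ^ 2 / (2 * v)) * (1 / 2)) := by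
  have h0 : gaussianReal m v (Set.Ioi (m + θ)) = gaussianReal (m - θ) v (Set.Ioi m) := by
    rw [← gm_aux_add (m - θ) v m θ]
    congr 2; ring
  have hv' : (0 : ℝ) < v := by positivity
  rw [h0, ENNReal.ofReal_mul (Real.exp_pos _).le]
  refine (gm_aux_compare (m - θ) m v hv _ (Real.exp_pos (-θ ^ 2 / (2 * v))).le _
    measurableSet_Ioi (fun t ht => ?_)).trans (mul_le_mul_right (gm_aux_half m v) _)
  apply gm_aux_pdf
  rw [← add_div]
  have : m < t := ht
  gcongr
  nlinarith [mul_nonneg hθ (sub_nonneg.2 this.le)]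

lemma gm_aux_tail_left (m : ℝ) (v : NNReal) (hv : v ≠ 0) (θ : ℝ) (hθ : 0 ≤ θ) :
    gaussianReal m v (Set.Iio (m - θ)) ≤
      ENNReal.ofReal (Real.exp (-θ ^ 2 / (2 * v)) * (1 / 2)) := by
  rw [gm_aux_neg, show -(m - θ) = -m + θ by ring]
  exact gm_aux_tail _ v hv θ hθ

/-- Gaussian mechanism differential privacy (Theorem 1, per-coordinate form). -/
theorem gaussian_mechanism_dp
    (ε δ Δ : ℝ) (hε : 0 < ε) (hε1 : ε ≤ 1) (hδ : 0 < δ) (hδ1 : δ ≤ 1 / 100)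
    (hΔ : 0 < Δ) (σ : ℝ)
    (hσ : σ = Δ * Real.sqrt (2 * Real.log (1.25 / δ)) / ε)
    (x y : ℝ) (hxy : |x - y| ≤ Δ) (O : Set ℝ) (hO : MeasurableSet O) :
    gaussianReal x ⟨σ ^ 2, sq_nonneg σ⟩ O ≤
      ENNReal.ofReal (Real.exp ε) * gaussianReal y ⟨σ ^ 2, sq_nonneg σ⟩ O
        + ENNReal.ofReal δ := by
  set L := Real.log (1.25 / δ) with hL
  have hq : 125 ≤ 1.25 / δ := by
    rw [le_div_iff₀ hδ]; norm_num; linarith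
  have hL1 : 1 / 2 ≤ L := by
    have h1 := Real.one_sub_inv_le_log_of_pos (show 0 < 1.25 / δ by linarith)
    have h2 : (1.25 / δ)⁻¹ ≤ 125⁻¹ := inv_anti₀ (by norm_num) hq
    have h3 : (125 : ℝ)⁻¹ ≤ 1 / 2 := by norm_num
    linarith
  have hs2 : σ ^ 2 * ε ^ 2 = Δ ^ 2 * (2 * L) := by
    rw [hσ, div_pow, mul_pow, Real.sq_sqrt (by linarith)]
    field_simp
  have hs : 0 < σ ^ 2 := by
    have : 0 < Δ ^ 2 * (2 * L) := by positivity
    rw [← hs2] at this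
    exact pos_of_mul_pos_left this (by positivity)
  suffices H : ∀ v : NNReal, (v : ℝ) = σ ^ 2 → gaussianReal x v O ≤
      ENNReal.ofReal (Real.exp ε) * gaussianReal y v O + ENNReal.ofReal δ from H _ rfl
  intro v hvs
  rw [← hvs] at hs hs2
  have hv : v ≠ 0 := by
    rintro rfl
    simp at hs
  -- threshold
  set θ := v * ε / Δ - Δ / 2 with hθ
  have hθΔ : θ * Δ = v * ε - Δ ^ 2 / 2 := by
    rw [hθ]; field_simp
  have hveΔ : Δ ^ 2 ≤ v * ε := by
    have h1 : Δ ^ 2 ≤ v * ε ^ 2 := by rw [hs2]; nlinarith [sq_nonneg Δ]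
    nlinarith [mul_pos hs hε]
  have hθ0 : 0 ≤ θ := by
    by_contra! h
    nlinarith [mul_neg_of_neg_of_pos h hΔ]
  have hexp : Real.exp (-θ ^ 2 / (2 * v)) * (1 / 2) ≤ δ := by
    have h1 : -θ ^ 2 / (2 * v) ≤ 1 / 2 - L := by
      have h3 : θ ^ 2 / (2 * v) = L - ε / 2 + Δ ^ 2 / (8 * v) := by
        have : L = v * ε ^ 2 / (2 * Δ ^ 2) := by
          rw [hs2]; field_simp
        rw [this, hθ]
        field_simp
        ring
      have : 0 ≤ Δ ^ 2 / (8 * (v : ℝ)) := by positivity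
      rw [neg_div]
      linarith
    have h2 : Real.exp (1 / 2 - L) = Real.exp (1 / 2) * (δ / 1.25) := by
      rw [Real.exp_sub, hL, Real.exp_log (by linarith)]
      field_simp
    have h4 : Real.exp (1 / 2) ≤ 2 := by
      have h5 : Real.exp (1 / 2) * Real.exp (1 / 2) = Real.exp 1 := by
        rw [← Real.exp_add]; norm_num
      nlinarith [Real.exp_one_lt_d9, Real.exp_pos (1 / 2)]
    have h6 := Real.exp_le_exp.2 h1
    rw [h2] at h6
    have h7 : Real.exp (1 / 2) * (δ / 1.25) ≤ 2 * (δ / 1.25) := by gcongr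
    norm_num at h6 h7 ⊢
    linarith
  -- reduction to a bad set
  have key : ∀ B : Set ℝ, MeasurableSet B → gaussianReal x v B ≤ ENNReal.ofReal δ →
      (∀ t ∉ B, (t - x) * (x - y) + (x - y) ^ 2 / 2 ≤ v * ε) →
      gaussianReal x v O ≤
        ENNReal.ofReal (Real.exp ε) * gaussianReal y v O + ENNReal.ofReal δ := by
    intro B hB hBδ hB'
    calc gaussianReal x v O ≤ gaussianReal x v (O \ B) + gaussianReal x v B := by
          refine (measure_mono ?_).trans (measure_union_le _ _)
          rw [Set.sdiff_union_self]
          exact Set.subset_union_left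
      _ ≤ ENNReal.ofReal (Real.exp ε) * gaussianReal y v (O \ B) + ENNReal.ofReal δ := by
          refine add_le_add (gm_aux_compare x y v hv _ (Real.exp_pos ε).le _
            (hO.diff hB) fun t ht => ?_) hBδ
          apply gm_aux_pdf
          have h := hB' t ht.2
          have : ε + -(t - y) ^ 2 / (2 * v) = (2 * v * ε + -(t - y) ^ 2) / (2 * v) := by
            field_simp
          rw [this]
          gcongr
          nlinarith
      _ ≤ _ := by
          gcongr
          exact Set.sdiff_subset
  have hδle := ENNReal.ofReal_le_ofReal hexp
  obtain ⟨hl, hr⟩ := abs_le.1 hxy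
  have hgen : ∀ d z : ℝ, 0 ≤ d → d ≤ Δ → z ≤ θ → z * d + d ^ 2 / 2 ≤ v * ε := by
    intro d z hd hdΔ hz
    have h1 : z * d ≤ θ * d := mul_le_mul_of_nonneg_right hz hd
    have h2 : θ * d ≤ θ * Δ := mul_le_mul_of_nonneg_left hdΔ hθ0
    nlinarith
  rcases le_total 0 (x - y) with hd | hd
  · refine key (Set.Ioi (x + θ)) measurableSet_Ioi ((gm_aux_tail x v hv θ hθ0).trans hδle) ?_
    intro t ht
    have ht' : t ≤ x + θ := by simpa using ht
    exact hgen (x - y) (t - x) hd hr (by linarith)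
  · refine key (Set.Iio (x - θ)) measurableSet_Iio
      ((gm_aux_tail_left x v hv θ hθ0).trans hδle) ?_
    intro t ht
    have ht' : x - θ ≤ t := by simpa using ht
    have := hgen (y - x) (x - t) (by linarith) (by linarith) (by linarith)
    nlinarith
end

section
/- Log-moment of the Gaussian privacy loss (computation in the proof of the composition theorem). Let σ > 0 and Δ ∈ ℝ, and let μ₀ and μ₁ denote the densities of the Gaussian distributions N(0, σ²) and N(Δ, σ²) on ℝ. Then for every real τ ≥ 0: ∫ (μ₀(z)/μ₁(z))^τ d(gaussianReal 0 σ²)(z) = exp(τ(τ+1)Δ²/(2σ²)), and likewise ∫ (μ₁(z)/μ₀(z))^τ d(gaussianReal Δ σ²)(z) = exp(τ(τ+1)Δ²/(2σ²)). In particular, if σ = Δ·√(2·ln(1.25/δ))/ε with ε, δ, Δ > 0, both integrals equal exp(τ(τ+1)ε²/(4·ln(1.25/δ))). -/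
open ProbabilityTheory MeasureTheory

lemma gaussian_ratio_moment (a b : ℝ) (v : NNReal) (hv : 0 < (v : ℝ)) (τ : ℝ) :
    (∫ z, (gaussianPDFReal a v z / gaussianPDFReal b v z) ^ τ ∂(gaussianReal a v))
      = Real.exp (τ * (τ + 1) * (a - b) ^ 2 / (2 * v)) := by
  have h : ∀ z : ℝ, (gaussianPDFReal a v z / gaussianPDFReal b v z) ^ τ
      = Real.exp (τ * (a - b) / v * z) * Real.exp (τ * (b ^ 2 - a ^ 2) / (2 * v)) := by
    intro z
    have hc : (Real.sqrt (2 * Real.pi * v))⁻¹ ≠ 0 := by positivity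
    simp only [gaussianPDFReal]
    rw [mul_div_mul_left _ _ hc, ← Real.exp_sub, ← Real.exp_mul, ← Real.exp_add]
    congr 1
    field_simp
    ring
  have hm := congrFun (mgf_id_gaussianReal (μ := a) (v := v)) (τ * (a - b) / v)
  simp only [mgf, id] at hm
  simp only [h]
  rw [integral_mul_const, hm, ← Real.exp_add]
  congr 1
  field_simp
  ring

/-- Log-moment of the Gaussian privacy loss: the τ-th moment generating function of the
privacy loss of the Gaussian mechanism, together with its value for the calibrated noise. -/
theorem gaussian_privacy_loss_log_moment
    (σ Δ : ℝ) (hσ : 0 < σ) (τ : ℝ) (hτ : 0 ≤ τ) :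
    (∫ z, (gaussianPDFReal 0 ⟨σ ^ 2, sq_nonneg σ⟩ z /
            gaussianPDFReal Δ ⟨σ ^ 2, sq_nonneg σ⟩ z) ^ τ
        ∂(gaussianReal 0 ⟨σ ^ 2, sq_nonneg σ⟩))
      = Real.exp (τ * (τ + 1) * Δ ^ 2 / (2 * σ ^ 2)) ∧
    (∫ z, (gaussianPDFReal Δ ⟨σ ^ 2, sq_nonneg σ⟩ z /
            gaussianPDFReal 0 ⟨σ ^ 2, sq_nonneg σ⟩ z) ^ τ
        ∂(gaussianReal Δ ⟨σ ^ 2, sq_nonneg σ⟩))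
      = Real.exp (τ * (τ + 1) * Δ ^ 2 / (2 * σ ^ 2)) ∧
    (∀ ε δ : ℝ, 0 < ε → 0 < δ → 0 < Δ →
      σ = Δ * Real.sqrt (2 * Real.log (1.25 / δ)) / ε →
      Real.exp (τ * (τ + 1) * Δ ^ 2 / (2 * σ ^ 2))
        = Real.exp (τ * (τ + 1) * ε ^ 2 / (4 * Real.log (1.25 / δ)))) := by
  have hv : 0 < ((⟨σ ^ 2, sq_nonneg σ⟩ : NNReal) : ℝ) := by
    change 0 < σ ^ 2
    positivity
  refine ⟨?_, ?_, ?_⟩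
  · rw [gaussian_ratio_moment 0 Δ _ hv τ, zero_sub, neg_sq]
    rfl
  · rw [gaussian_ratio_moment Δ 0 _ hv τ, sub_zero]
    rfl
  · intro ε δ hε hδ hΔ hs
    have hL : 0 < Real.log (1.25 / δ) := by
      by_contra hn
      rw [Real.sqrt_eq_zero_of_nonpos (by linarith)] at hs
      simp at hs
      linarith
    have h2 : σ ^ 2 = Δ ^ 2 * (2 * Real.log (1.25 / δ)) / ε ^ 2 := by
      rw [hs, div_pow, mul_pow, Real.sq_sqrt (by positivity)]
    rw [h2]
    congr 1
    generalize Real.log (1.25 / δ) = L at *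
    field_simp
    ring
end

section
/- Algebraic core of the moments-accountant composition bound (Theorem: Advanced Composition). Let t ≥ 1 and ε, ε̄ > 0 be real numbers, let δ ∈ (0,1), and set L = ln(1.25/δ). Assume (i) t·ε²/(2L) < ε̄, and (ii) ln δ ≥ − t·ε²/(16L) + ε̄/2 − ε̄²·L/(t·ε²). Then ε̄ ≥ ε·√(t·ln(1/δ)/L). -/
/-- Algebraic core of the moments-accountant composition bound (Advanced Composition). -/
theorem moments_accountant_composition
    (t : ℕ) (ht : 1 ≤ t) (ε εbar : ℝ) (hε : 0 < ε) (hεbar : 0 < εbar)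
    (δ : ℝ) (hδ : 0 < δ) (hδ1 : δ < 1)
    (L : ℝ) (hL : L = Real.log (1.25 / δ))
    (h1 : (t : ℝ) * ε ^ 2 / (2 * L) < εbar)
    (h2 : Real.log δ ≥
      -((t : ℝ) * ε ^ 2 / (16 * L)) + εbar / 2 - εbar ^ 2 * L / ((t : ℝ) * ε ^ 2)) :
    εbar ≥ ε * Real.sqrt ((t : ℝ) * Real.log (1 / δ) / L) := by
  have hLpos : 0 < L := by
    rw [hL]
    apply Real.log_pos
    rw [lt_div_iff₀ hδ]
    linarith
  have htpos : (0 : ℝ) < t := by exact_mod_cast ht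
  have hA : 0 < (t : ℝ) * ε ^ 2 := by positivity
  have e1 : (t : ℝ) * ε ^ 2 / (16 * L) = (t : ℝ) * ε ^ 2 / (2 * L) / 8 := by
    field_simp
    norm_num
  have h3 : Real.log (1 / δ) ≤ εbar ^ 2 * L / ((t : ℝ) * ε ^ 2) := by
    rw [one_div, Real.log_inv]
    linarith
  rw [le_div_iff₀ hA] at h3
  have h4 : (t : ℝ) * Real.log (1 / δ) / L ≤ (εbar / ε) ^ 2 := by
    rw [div_pow, div_le_div_iff₀ hLpos (by positivity)]
    linarith
  have h5 := Real.sqrt_le_sqrt h4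
  rw [Real.sqrt_sq (by positivity), le_div_iff₀ hε] at h5
  linarith
end

section
/- Single-iteration inequality of DP-ADMM for a convex, possibly non-smooth objective (full Lemma 2). Let E be a real inner product space, n ≥ 1 a natural number, ρ > 0, and for each i ∈ {1,…,n} let η_i > 0, let f_i : E → ℝ be convex, let w̃_i⁰, γ_i⁰ ∈ E, let w⁰ ∈ E, let ξ_i ∈ E, and let g_i ∈ E be a subgradient of f_i at w̃_i⁰ (i.e., f_i(z) ≥ f_i(w̃_i⁰) + ⟨g_i, z − w̃_i⁰⟩ for all z ∈ E). Define for each i: w̃_i¹ = (ρ + 1/η_i)⁻¹·(−g_i + γ_i⁰ + ρ·w⁰ + (1/η_i)·w̃_i⁰) + ξ_i, then w¹ = (1/n)·Σ_i w̃_i¹ − (1/(nρ))·Σ_i γ_i⁰, and γ_i¹ = γ_i⁰ − ρ·(w̃_i¹ − w¹). Then for all choices of w_i, w, γ_i ∈ E: Σ_i [ f_i(w̃_i⁰) − f_i(w_i) + ⟨−γ_i¹, w̃_i¹ − w_i⟩ + ⟨γ_i¹, w¹ − w⟩ + ⟨γ_i¹ − γ_i, w̃_i¹ − w¹⟩ ]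 ≤ Σ_i [ (η_i/2)·‖g_i − (ρ + 1/η_i)·ξ_i‖² − (ρ + 1/η_i)·⟨ξ_i, w_i − w̃_i⁰⟩ + (1/(2η_i))·(‖w_i − w̃_i⁰‖² − ‖w_i − w̃_i¹‖²) + (ρ/2)·(‖w_i − w⁰‖² − ‖w_i − w¹‖²) + (1/(2ρ))·(‖γ_i − γ_i⁰‖² − ‖γ_i − γ_i¹‖²) ]. -/
open scoped RealInnerProductSpace
open Finset

/-- Squared norm of a difference. -/
lemma dpadmm_nsq {E : Type*} [NormedAddCommGroup E] [InnerProductSpace ℝ E] (x y : E) :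
    ‖x - y‖ ^ 2 = ⟪x, x⟫ - 2 * ⟪x, y⟫ + ⟪y, y⟫ := by
  rw [norm_sub_sq_real, real_inner_self_eq_norm_sq, real_inner_self_eq_norm_sq]

/-- Young-type bound for the gradient term. -/
lemma dpadmm_young {E : Type*} [NormedAddCommGroup E] [InnerProductSpace ℝ E]
    (η : ℝ) (hη : 0 < η) (h x : E) :
    ⟪h, x⟫ ≤ η / 2 * ‖h‖ ^ 2 + 1 / (2 * η) * ‖x‖ ^ 2 := by
  have h1 : 0 ≤ η / 2 * ‖h - (1 / η) • x‖ ^ 2 := by positivity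
  have h2 : η / 2 * ‖h - (1 / η) • x‖ ^ 2
      = η / 2 * ‖h‖ ^ 2 + 1 / (2 * η) * ‖x‖ ^ 2 - ⟪h, x⟫ := by
    rw [norm_sub_sq_real, norm_smul, inner_smul_right, mul_pow, Real.norm_eq_abs, sq_abs]
    field_simp
    ring
  linarith

/-- Three-point identity. -/
lemma dpadmm_three {E : Type*} [NormedAddCommGroup E] [InnerProductSpace ℝ E] (a b c : E) :
    ⟪b - a, b - c⟫ = (‖c - b‖ ^ 2 + ‖a - b‖ ^ 2 - ‖c - a‖ ^ 2) / 2 := by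
  simp only [dpadmm_nsq, inner_sub_left, inner_sub_right]
  rw [real_inner_comm b a, real_inner_comm c a, real_inner_comm c b]
  ring

/-- Bound for the global and dual terms. -/
lemma dpadmm_dual {E : Type*} [NormedAddCommGroup E] [InnerProductSpace ℝ E]
    (ρ : ℝ) (hρ : 0 < ρ) (w0 w1 x z γ γ0 γ1 : E) (hγ : γ1 = γ0 - ρ • (x - w1)) :
    ρ * ⟪w0 - w1, x - z⟫ + ⟪γ1 - γ, x - w1⟫
      ≤ ρ / 2 * (‖z - w0‖ ^ 2 - ‖z - w1‖ ^ 2)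
        + 1 / (2 * ρ) * (‖γ - γ0‖ ^ 2 - ‖γ - γ1‖ ^ 2) := by
  have e : γ - γ0 = (γ - γ1) - ρ • (x - w1) := by rw [hγ]; abel
  have h1 : 1 / (2 * ρ) * (‖γ - γ0‖ ^ 2 - ‖γ - γ1‖ ^ 2)
      = ⟪γ1 - γ, x - w1⟫ + ρ / 2 * ‖x - w1‖ ^ 2 := by
    rw [e, norm_sub_sq_real (γ - γ1), norm_smul, inner_smul_right, mul_pow, Real.norm_eq_abs,
      sq_abs, ← neg_sub γ γ1, inner_neg_left]
    field_simp
    ring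
  have h2 : 0 ≤ ρ / 2 * ‖x - w0‖ ^ 2 := by positivity
  have h3 : ρ / 2 * (‖z - w0‖ ^ 2 - ‖z - w1‖ ^ 2) + ρ / 2 * ‖x - w1‖ ^ 2
      - ρ * ⟪w0 - w1, x - z⟫ = ρ / 2 * ‖x - w0‖ ^ 2 := by
    simp only [dpadmm_nsq, inner_sub_left, inner_sub_right]
    rw [real_inner_comm x w0, real_inner_comm x w1, real_inner_comm z w0, real_inner_comm z w1]
    ring
  linarith

/-- Single-iteration inequality of DP-ADMM for a convex, possibly non-smooth objective
(full Lemma 2). -/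
theorem dp_admm_one_step_nonsmooth
    {E : Type*} [NormedAddCommGroup E] [InnerProductSpace ℝ E]
    (n : ℕ) (hn : 1 ≤ n) (ρ : ℝ) (hρ : 0 < ρ)
    (η : Fin n → ℝ) (hη : ∀ i, 0 < η i)
    (f : Fin n → E → ℝ) (hf : ∀ i, ConvexOn ℝ Set.univ (f i))
    (wt0 γ0 : Fin n → E) (w0 : E) (ξ g : Fin n → E)
    (hg : ∀ i, ∀ z : E, f i z ≥ f i (wt0 i) + ⟪g i, z - wt0 i⟫)
    (wt1 : Fin n → E)
    (hwt1 : ∀ i, wt1 i =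
      (ρ + 1 / η i)⁻¹ • (-(g i) + γ0 i + ρ • w0 + (1 / η i) • wt0 i) + ξ i)
    (w1 : E)
    (hw1 : w1 = (1 / (n : ℝ)) • ∑ i, wt1 i - (1 / ((n : ℝ) * ρ)) • ∑ i, γ0 i)
    (γ1 : Fin n → E) (hγ1 : ∀ i, γ1 i = γ0 i - ρ • (wt1 i - w1)) :
    ∀ (wi : Fin n → E) (w : E) (γ : Fin n → E),
      ∑ i, (f i (wt0 i) - f i (wi i) + ⟪-(γ1 i), wt1 i - wi i⟫
            + ⟪γ1 i, w1 - w⟫ + ⟪γ1 i - γ i, wt1 i - w1⟫)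
      ≤ ∑ i, (η i / 2 * ‖g i - (ρ + 1 / η i) • ξ i‖ ^ 2
            - (ρ + 1 / η i) * ⟪ξ i, wi i - wt0 i⟫
            + 1 / (2 * η i) * (‖wi i - wt0 i‖ ^ 2 - ‖wi i - wt1 i‖ ^ 2)
            + ρ / 2 * (‖wi i - w0‖ ^ 2 - ‖wi i - w1‖ ^ 2)
            + 1 / (2 * ρ) * (‖γ i - γ0 i‖ ^ 2 - ‖γ i - γ1 i‖ ^ 2)) := by
  intro wi w γ
  have hn0 : (n : ℝ) ≠ 0 := by
    have : 0 < n := hn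
    positivity
  have hsum : ∑ i, γ1 i = 0 := by
    have h1 : ((n : ℝ) * ρ) • w1 = ρ • ∑ i, wt1 i - ∑ i, γ0 i := by
      rw [hw1, smul_sub, smul_smul, smul_smul]
      congr 2
      · field_simp
      · rw [mul_one_div_cancel (mul_ne_zero hn0 hρ.ne'), one_smul]
    simp only [hγ1, Finset.sum_sub_distrib, ← Finset.smul_sum]
    rw [Finset.sum_const, Finset.card_univ, Fintype.card_fin, smul_sub, ← Nat.cast_smul_eq_nsmul ℝ,
      smul_smul, mul_comm ρ, h1]
    abel
  have hz : ∑ i, ⟪γ1 i, w1 - w⟫ = 0 := by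
    rw [← sum_inner, hsum, inner_zero_left]
  rw [← sub_nonneg]
  have hkey : ∀ i, (f i (wt0 i) - f i (wi i) + ⟪-(γ1 i), wt1 i - wi i⟫
            + ⟪γ1 i, w1 - w⟫ + ⟪γ1 i - γ i, wt1 i - w1⟫)
      ≤ (η i / 2 * ‖g i - (ρ + 1 / η i) • ξ i‖ ^ 2
            - (ρ + 1 / η i) * ⟪ξ i, wi i - wt0 i⟫
            + 1 / (2 * η i) * (‖wi i - wt0 i‖ ^ 2 - ‖wi i - wt1 i‖ ^ 2)
            + ρ / 2 * (‖wi i - w0‖ ^ 2 - ‖wi i - w1‖ ^ 2)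
            + 1 / (2 * ρ) * (‖γ i - γ0 i‖ ^ 2 - ‖γ i - γ1 i‖ ^ 2)) + ⟪γ1 i, w1 - w⟫ := by
    intro i
    have hηi := hη i
    have hc : ρ + 1 / η i ≠ 0 := by positivity
    have hopt : g i - (ρ + 1 / η i) • ξ i
        = γ1 i + ρ • (w0 - w1) - (1 / η i) • (wt1 i - wt0 i) := by
      have h1 : (ρ + 1 / η i) • wt1 i = -(g i) + γ0 i + ρ • w0 + (1 / η i) • wt0 i
          + (ρ + 1 / η i) • ξ i := by
        rw [hwt1 i, smul_add, smul_smul, mul_inv_cancel₀ hc, one_smul]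
      have h2 : (ρ + 1 / η i) • ξ i = (ρ + 1 / η i) • wt1 i
          - (-(g i) + γ0 i + ρ • w0 + (1 / η i) • wt0 i) := by rw [h1]; abel
      rw [h2, hγ1 i]
      module
    have hs := hg i (wi i)
    have hy := dpadmm_young (η i) hηi (g i - (ρ + 1 / η i) • ξ i) (wt0 i - wt1 i)
    have hd := dpadmm_dual ρ hρ w0 w1 (wt1 i) (wi i) (γ i) (γ0 i) (γ1 i) (hγ1 i)
    have ht := dpadmm_three (wt0 i) (wt1 i) (wi i)
    have hsplit : ⟪g i, wi i - wt0 i⟫ = (ρ + 1 / η i) * ⟪ξ i, wi i - wt0 i⟫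
        - ⟪g i - (ρ + 1 / η i) • ξ i, wt0 i - wt1 i⟫
        - ⟪g i - (ρ + 1 / η i) • ξ i, wt1 i - wi i⟫ := by
      rw [sub_sub, ← inner_add_right, sub_add_sub_cancel]
      simp only [inner_sub_left, inner_sub_right, real_inner_smul_left]
      ring
    have h2 : ⟪g i - (ρ + 1 / η i) • ξ i, wt1 i - wi i⟫ = ⟪γ1 i, wt1 i - wi i⟫
        + ρ * ⟪w0 - w1, wt1 i - wi i⟫ - 1 / η i * ⟪wt1 i - wt0 i, wt1 i - wi i⟫ := by
      rw [hopt, inner_sub_left, inner_add_left, real_inner_smul_left, real_inner_smul_left]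
    have h3 : 1 / η i * ⟪wt1 i - wt0 i, wt1 i - wi i⟫ = 1 / (2 * η i) *
        (‖wi i - wt1 i‖ ^ 2 + ‖wt0 i - wt1 i‖ ^ 2 - ‖wi i - wt0 i‖ ^ 2) := by
      rw [ht]; field_simp
    rw [inner_neg_left]
    linarith
  have := Finset.sum_le_sum (fun i (_ : i ∈ Finset.univ) => hkey i)
  rw [Finset.sum_add_distrib (g := fun i => ⟪γ1 i, w1 - w⟫), hz] at this
  linarith
end

section
/- Deterministic (pathwise) form of the convergence bound for DP-ADMM with convex non-smooth objectives (core of Theorem 2). Let E be a finite-dimensional real inner product space, n ≥ 1 and t ≥ 1 natural numbers, ρ > 0. For each i ∈ {1,…,n}: f_i : E → ℝ is convex and η_i^1 ≥ η_i^2 ≥ … ≥ η_i^t > 0. Suppose given w̃_i^k (0 ≤ k ≤ t), w^k (0 ≤ k ≤ t), γ_i^k (0 ≤ k ≤ t), and ξ_i^k, g_i^k (1 ≤ k ≤ t), all in E, such that for every i and 1 ≤ k ≤ t: (i) g_i^k is a subgradient of f_i at w̃_i^{k−1} (f_i(z) ≥ f_i(w̃_i^{k−1}) + ⟨g_i^k,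 z − w̃_i^{k−1}⟩ for all z); (ii) w̃_i^k = (ρ + 1/η_i^k)⁻¹·(−g_i^k + γ_i^{k−1} + ρ·w^{k−1} + (1/η_i^k)·w̃_i^{k−1}) + ξ_i^k; (iii) w^k = (1/n)·Σ_i w̃_i^k − (1/(nρ))·Σ_i γ_i^{k−1}; (iv) γ_i^k = γ_i^{k−1} − ρ·(w̃_i^k − w^k). Suppose in addition γ_i^0 = 0 for all i, and that w* ∈ E and constants c, c_w ≥ 0 satisfy ‖w* − w̃_i^k‖ ≤ c for all i and all 0 ≤ k ≤ t−1, and ‖w* − w^0‖ ≤ c_w. Define ā_i = (1/t)·Σ_{k=0}^{t−1} w̃_i^k, b̄_i = (1/t)·Σ_{k=1}^{t} w̃_i^k, and w̄ = (1/t)·Σ_{k=1}^{t} w^k. Then for every β ≥ 0: Σ_i ( f_i(ā_i) − f_i(w*) + β·‖b̄_i − w̄‖ ) ≤ (1/t)·Σ_i Σ_{k=1}^{t} [ (η_i^k/2)·‖g_i^k − (ρ + 1/η_i^k)·ξ_i^k‖² − (ρ + 1/η_i^k)·⟨ξ_i^k, w* − w̃_i^{k−1}⟩ ] + (1/t)·Σ_i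 c²/(2·η_i^t) + n·ρ·c_w²/(2t) + n·β²/(2ρt). -/
open scoped RealInnerProductSpace
open Finset

lemma admm_pointwise {E : Type*} [NormedAddCommGroup E] [InnerProductSpace ℝ E]
    (ρ η : ℝ) (hρ : 0 < ρ) (hη : 0 < η) (G ξ γ d z y u : E)
    (hG : G = γ + ρ • y + (1 / η) • u) :
    ⟪G + (ρ + 1 / η) • ξ, u + d + z⟫ ≤ η / 2 * ‖G‖ ^ 2
      - (ρ + 1 / η) * ⟪ξ, -(u + d + z)⟫
      + (‖u + d + z‖ ^ 2 - ‖d + z‖ ^ 2) / (2 * η)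
      + (‖γ + ρ • d‖ ^ 2 - ‖γ‖ ^ 2) / (2 * ρ)
      + ρ / 2 * (‖y + z‖ ^ 2 - ‖z‖ ^ 2) + (⟪γ, z⟫ + ρ * ⟪y, d⟫) := by
  have h1 : ⟪G, u⟫ ≤ η / 2 * ‖G‖ ^ 2 + ‖u‖ ^ 2 / (2 * η) := by
    have h0 : 0 ≤ ‖η • G - u‖ ^ 2 := by positivity
    rw [norm_sub_sq_real, norm_smul, inner_smul_left, Real.norm_of_nonneg hη.le] at h0
    simp only [conj_trivial] at h0
    have : η / 2 * ‖G‖ ^ 2 + ‖u‖ ^ 2 / (2 * η) - ⟪G, u⟫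
        = ((η * ‖G‖) ^ 2 - 2 * (η * ⟪G, u⟫) + ‖u‖ ^ 2) / (2 * η) := by
      field_simp
      ring
    have h2 := div_nonneg h0 (by positivity : 0 ≤ 2 * η)
    linarith
  have e1 : ‖u + d + z‖ ^ 2 - ‖d + z‖ ^ 2 = ‖u‖ ^ 2 + 2 * ⟪u, d + z⟫ := by
    rw [add_assoc, norm_add_sq_real]; ring
  have e2 : (‖γ + ρ • d‖ ^ 2 - ‖γ‖ ^ 2) / (2 * ρ) = ⟪γ, d⟫ + ρ / 2 * ‖d‖ ^ 2 := by
    rw [norm_add_sq_real, norm_smul, inner_smul_right, Real.norm_of_nonneg hρ.le]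
    field_simp
    ring
  have e3 : ‖y + z‖ ^ 2 - ‖z‖ ^ 2 = ‖y‖ ^ 2 + 2 * ⟪y, z⟫ := by
    rw [norm_add_sq_real]; ring
  have e4 : ⟪G, d + z⟫ = ⟪γ, d⟫ + ⟪γ, z⟫ + ρ * (⟪y, d⟫ + ⟪y, z⟫) + (1 / η) * ⟪u, d + z⟫ := by
    rw [hG]
    simp only [inner_add_left, inner_add_right, inner_smul_left, conj_trivial]
    ring
  have e5 : ⟪G + (ρ + 1 / η) • ξ, u + d + z⟫
      = ⟪G, u⟫ + ⟪G, d + z⟫ + (ρ + 1 / η) * ⟪ξ, u + d + z⟫ := by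
    rw [inner_add_left, inner_smul_left, add_assoc, inner_add_right G]
    simp
  rw [e5, e4, e1, e2, e3, inner_neg_right]
  have p1 : 0 ≤ ρ / 2 * ‖d‖ ^ 2 := by positivity
  have p2 : 0 ≤ ρ / 2 * ‖y‖ ^ 2 := by positivity
  have e6 : (‖u‖ ^ 2 + 2 * ⟪u, d + z⟫) / (2 * η)
      = ‖u‖ ^ 2 / (2 * η) + (1 / η) * ⟪u, d + z⟫ := by
    field_simp
  rw [e6]
  linarith

/-- Deterministic (pathwise) form of the convergence bound for DP-ADMM with convex
non-smooth objectives (core of Theorem 2). -/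
theorem dp_admm_convergence_nonsmooth
    {E : Type*} [NormedAddCommGroup E] [InnerProductSpace ℝ E] [FiniteDimensional ℝ E]
    (n t : ℕ) (hn : 1 ≤ n) (ht : 1 ≤ t) (ρ : ℝ) (hρ : 0 < ρ)
    (f : Fin n → E → ℝ) (hf : ∀ i, ConvexOn ℝ Set.univ (f i))
    (η : Fin n → ℕ → ℝ)
    (hηpos : ∀ i k, 1 ≤ k → k ≤ t → 0 < η i k)
    (hηmono : ∀ i k, 1 ≤ k → k + 1 ≤ t → η i (k + 1) ≤ η i k)
    (wt : Fin n → ℕ → E) (w : ℕ → E) (γ : Fin n → ℕ → E)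
    (ξ g : Fin n → ℕ → E)
    (hsub : ∀ i k, 1 ≤ k → k ≤ t → ∀ z : E,
      f i z ≥ f i (wt i (k - 1)) + ⟪g i k, z - wt i (k - 1)⟫)
    (hprimal : ∀ i k, 1 ≤ k → k ≤ t →
      wt i k = (ρ + 1 / η i k)⁻¹ •
        (-(g i k) + γ i (k - 1) + ρ • w (k - 1) + (1 / η i k) • wt i (k - 1)) + ξ i k)
    (hglobal : ∀ k, 1 ≤ k → k ≤ t →
      w k = (1 / (n : ℝ)) • ∑ i, wt i k - (1 / ((n : ℝ) * ρ)) • ∑ i, γ i (k - 1))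
    (hdual : ∀ i k, 1 ≤ k → k ≤ t → γ i k = γ i (k - 1) - ρ • (wt i k - w k))
    (hγ0 : ∀ i, γ i 0 = 0)
    (wstar : E) (c c_w : ℝ) (hc : 0 ≤ c) (hcw : 0 ≤ c_w)
    (hbound : ∀ i k, k ≤ t - 1 → ‖wstar - wt i k‖ ≤ c)
    (hw0 : ‖wstar - w 0‖ ≤ c_w) :
    ∀ β : ℝ, 0 ≤ β →
      ∑ i, (f i ((1 / (t : ℝ)) • ∑ k ∈ Finset.range t, wt i k) - f i wstar
            + β * ‖(1 / (t : ℝ)) • ∑ k ∈ Finset.Icc 1 t, wt i k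
                    - (1 / (t : ℝ)) • ∑ k ∈ Finset.Icc 1 t, w k‖)
      ≤ (1 / (t : ℝ)) * ∑ i, ∑ k ∈ Finset.Icc 1 t,
            (η i k / 2 * ‖g i k - (ρ + 1 / η i k) • ξ i k‖ ^ 2
              - (ρ + 1 / η i k) * ⟪ξ i k, wstar - wt i (k - 1)⟫)
        + (1 / (t : ℝ)) * ∑ i, c ^ 2 / (2 * η i t)
        + (n : ℝ) * ρ * c_w ^ 2 / (2 * (t : ℝ))
        + (n : ℝ) * β ^ 2 / (2 * ρ * (t : ℝ)) := by
  intro β hβ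
  have hn0 : (n : ℝ) ≠ 0 := by positivity
  have ht0 : (0 : ℝ) < t := by positivity
  -- the multipliers sum to zero
  have hsum : ∀ k, k ≤ t → ∑ i, γ i k = 0 := by
    intro k hk
    rcases Nat.eq_zero_or_pos k with rfl | hk0
    · simp [hγ0]
    · rw [Finset.sum_congr rfl (fun i _ => hdual i k hk0 hk)]
      rw [Finset.sum_sub_distrib, ← Finset.smul_sum, Finset.sum_sub_distrib]
      simp only [Finset.sum_const, Finset.card_univ, Fintype.card_fin]
      rw [← Nat.cast_smul_eq_nsmul ℝ, hglobal k hk0 hk]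
      simp only [smul_sub, smul_smul]
      have e1 : ρ * ((n : ℝ) * (1 / (n : ℝ))) = ρ := by field_simp
      have e2 : ρ * ((n : ℝ) * (1 / ((n : ℝ) * ρ))) = 1 := by field_simp
      rw [e1, e2, one_smul]
      abel
  set R : Fin n → ℕ → ℝ := fun i k => η i k / 2 * ‖g i k - (ρ + 1 / η i k) • ξ i k‖ ^ 2
              - (ρ + 1 / η i k) * ⟪ξ i k, wstar - wt i (k - 1)⟫ with hR
  -- one step
  have hstep : ∀ k, k + 1 ≤ t → ∑ i, (f i (wt i k) - f i wstar - R i (k + 1)) ≤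
      ∑ i, ((‖wt i k - wstar‖ ^ 2 - ‖wt i (k + 1) - wstar‖ ^ 2) / (2 * η i (k + 1))
        + (‖γ i k‖ ^ 2 - ‖γ i (k + 1)‖ ^ 2) / (2 * ρ))
        + n * (ρ / 2 * (‖w k - wstar‖ ^ 2 - ‖w (k + 1) - wstar‖ ^ 2)) := by
    intro k hk
    have hi : ∀ i, f i (wt i k) - f i wstar - R i (k + 1) ≤
      (‖wt i k - wstar‖ ^ 2 - ‖wt i (k + 1) - wstar‖ ^ 2) / (2 * η i (k + 1))
        + (‖γ i k‖ ^ 2 - ‖γ i (k + 1)‖ ^ 2) / (2 * ρ)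
        + ρ / 2 * (‖w k - wstar‖ ^ 2 - ‖w (k + 1) - wstar‖ ^ 2)
        + (⟪γ i (k + 1), w (k + 1) - wstar⟫ + ⟪w k - w (k + 1), γ i k - γ i (k + 1)⟫) := by
      intro i
      have hη := hηpos i (k + 1) (by omega) hk
      have hs := hsub i (k + 1) (by omega) hk wstar
      have hp := hprimal i (k + 1) (by omega) hk
      have hd := hdual i (k + 1) (by omega) hk
      simp only [Nat.add_sub_cancel] at hs hp hd
      have hpos : ρ + 1 / η i (k + 1) ≠ 0 := by positivity
      have hp' : (ρ + 1 / η i (k + 1)) • wt i (k + 1) = 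
        (-(g i (k + 1)) + γ i k + ρ • w k + (1 / η i (k + 1)) • wt i k)
          + (ρ + 1 / η i (k + 1)) • ξ i (k + 1) := by
        conv_lhs => rw [hp]
        rw [smul_add, smul_inv_smul₀ hpos]
      have hg : γ i (k + 1) + ρ • (wt i (k + 1) - w (k + 1)) = γ i k := by
        rw [hd]; abel
      have key := admm_pointwise ρ (η i (k + 1)) hρ hη
        (g i (k + 1) - (ρ + 1 / η i (k + 1)) • ξ i (k + 1)) (ξ i (k + 1)) (γ i (k + 1))
        (wt i (k + 1) - w (k + 1)) (w (k + 1) - wstar) (w k - w (k + 1))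
        (wt i k - wt i (k + 1)) (by
          have h3 : g i (k + 1) = γ i k + ρ • w k + (1 / η i (k + 1)) • wt i k
              + (ρ + 1 / η i (k + 1)) • ξ i (k + 1)
              - (ρ + 1 / η i (k + 1)) • wt i (k + 1) := by
            rw [hp']; abel
          rw [h3, hd]
          module)
      rw [hg] at key
      have e1 : wt i k - wt i (k + 1) + (wt i (k + 1) - w (k + 1)) + (w (k + 1) - wstar)
          = wt i k - wstar := by abel
      have e2 : (wt i (k + 1) - w (k + 1)) + (w (k + 1) - wstar)
          = wt i (k + 1) - wstar := by abel
      have e3 : w k - w (k + 1) + (w (k + 1) - wstar) = w k - wstar := by abel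
      have e4 : ρ * ⟪w k - w (k + 1), wt i (k + 1) - w (k + 1)⟫
          = ⟪w k - w (k + 1), γ i k - γ i (k + 1)⟫ := by
        rw [← inner_smul_right, ← hg]; congr 1; abel
      rw [e1, e2, e3, e4, sub_add_cancel, neg_sub] at key
      have e5 : ⟪g i (k + 1), wstar - wt i k⟫ = - ⟪g i (k + 1), wt i k - wstar⟫ := by
        rw [← inner_neg_right, neg_sub]
      simp only [hR, Nat.add_sub_cancel]
      linarith
    refine (Finset.sum_le_sum (fun i _ => hi i)).trans (le_of_eq ?_)
    have z1 : ∑ i, (⟪γ i (k + 1), w (k + 1) - wstar⟫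
        + ⟪w k - w (k + 1), γ i k - γ i (k + 1)⟫) = 0 := by
      rw [Finset.sum_add_distrib, ← sum_inner, ← inner_sum, Finset.sum_sub_distrib,
        hsum k (by omega), hsum (k + 1) hk]
      simp
    rw [Finset.sum_add_distrib, z1, Finset.sum_add_distrib]
    simp
  -- accumulated bound
  have hacc : ∀ m, m + 1 ≤ t →
      ∑ k ∈ Finset.range (m + 1), ∑ i, (f i (wt i k) - f i wstar - R i (k + 1)) ≤
      ∑ i, ((c ^ 2 - ‖wt i (m + 1) - wstar‖ ^ 2) / (2 * η i (m + 1))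
        - ‖γ i (m + 1)‖ ^ 2 / (2 * ρ))
        + n * (ρ / 2 * (c_w ^ 2 - ‖w (m + 1) - wstar‖ ^ 2)) := by
    have hD : ∀ i k, k + 1 ≤ t → ‖wt i k - wstar‖ ^ 2 ≤ c ^ 2 := by
      intro i k hk
      rw [norm_sub_rev]
      exact pow_le_pow_left₀ (norm_nonneg _) (hbound i k (by omega)) 2
    intro m
    induction m with
    | zero =>
      intro hm
      rw [zero_add, Finset.sum_range_one]
      refine (hstep 0 hm).trans ?_
      have hw0' : ‖w 0 - wstar‖ ^ 2 ≤ c_w ^ 2 := by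
        rw [norm_sub_rev]
        exact pow_le_pow_left₀ (norm_nonneg _) hw0 2
      refine add_le_add (Finset.sum_le_sum fun i _ => ?_) ?_
      · have hη := hηpos i 1 le_rfl hm
        have h1 := hD i 0 hm
        rw [hγ0]
        have h2 : (‖wt i 0 - wstar‖ ^ 2 - ‖wt i (0 + 1) - wstar‖ ^ 2) / (2 * η i (0 + 1))
          ≤ (c ^ 2 - ‖wt i 1 - wstar‖ ^ 2) / (2 * η i 1) := by
          simp only [zero_add]
          gcongr
        simp only [zero_add, norm_zero] at h2 ⊢
        have h3 : ((0:ℝ) ^ 2 - ‖γ i 1‖ ^ 2) / (2 * ρ) = - (‖γ i 1‖ ^ 2 / (2 * ρ)) := by ring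
        rw [h3]
        linarith
      · simp only [zero_add]
        gcongr
    | succ m ih =>
      intro hm
      rw [Finset.sum_range_succ]
      refine (add_le_add (ih (by omega)) (hstep (m + 1) hm)).trans ?_
      rw [add_add_add_comm, ← Finset.sum_add_distrib]
      refine add_le_add (Finset.sum_le_sum fun i _ => ?_) (le_of_eq (by ring))
      have hη := hηpos i (m + 1 + 1) (by omega) hm
      have hmo := hηmono i (m + 1) (by omega) hm
      have h1 := hD i (m + 1) hm
      have h2 : (c ^ 2 - ‖wt i (m + 1) - wstar‖ ^ 2) / (2 * η i (m + 1))
          ≤ (c ^ 2 - ‖wt i (m + 1) - wstar‖ ^ 2) / (2 * η i (m + 1 + 1)) := by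
        apply div_le_div_of_nonneg_left (by linarith) (by positivity) (by linarith)
      have h3 : (c ^ 2 - ‖wt i (m + 1) - wstar‖ ^ 2) / (2 * η i (m + 1 + 1))
          + (‖wt i (m + 1) - wstar‖ ^ 2 - ‖wt i (m + 1 + 1) - wstar‖ ^ 2)
            / (2 * η i (m + 1 + 1))
          = (c ^ 2 - ‖wt i (m + 1 + 1) - wstar‖ ^ 2) / (2 * η i (m + 1 + 1)) := by ring
      have h4 : (‖γ i (m + 1)‖ ^ 2 - ‖γ i (m + 1 + 1)‖ ^ 2) / (2 * ρ)
          = ‖γ i (m + 1)‖ ^ 2 / (2 * ρ) - ‖γ i (m + 1 + 1)‖ ^ 2 / (2 * ρ) := by ring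
      linarith
  have hIcc : ∀ {M : Type _} [AddCommMonoid M] (h : ℕ → M),
      ∑ k ∈ Finset.Icc 1 t, h k = ∑ k ∈ Finset.range t, h (k + 1) := by
    intro M _ h
    rw [Finset.range_eq_Ico, Finset.sum_Ico_add' h 0 t 1]
    rfl
  have hIccR : ∀ (h : ℕ → ℝ),
      ∑ k ∈ Finset.Icc 1 t, h k = ∑ k ∈ Finset.range t, h (k + 1) := by
    intro h
    rw [Finset.range_eq_Ico, Finset.sum_Ico_add' h 0 t 1]
    rfl
  -- telescoped dual
  have htel : ∀ i, ‖(1 / (t : ℝ)) • ∑ k ∈ Finset.Icc 1 t, wt i k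
                    - (1 / (t : ℝ)) • ∑ k ∈ Finset.Icc 1 t, w k‖ = ‖γ i t‖ / (ρ * t) := by
    intro i
    have h1 : ρ • (∑ k ∈ Finset.range t, (wt i (k + 1) - w (k + 1))) = - γ i t := by
      rw [Finset.smul_sum]
      have : ∀ k ∈ Finset.range t, ρ • (wt i (k + 1) - w (k + 1)) = γ i k - γ i (k + 1) := by
        intro k hk
        have hd := hdual i (k + 1) (by omega) (by simpa [Nat.succ_le_iff] using hk)
        simp only [Nat.add_sub_cancel] at hd
        rw [hd]; abel
      rw [Finset.sum_congr rfl this, Finset.sum_range_sub', hγ0, zero_sub]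
    rw [hIcc, hIcc, ← smul_sub, ← Finset.sum_sub_distrib]
    have h2 : ∑ k ∈ Finset.range t, (wt i (k + 1) - w (k + 1)) = -(ρ⁻¹ • γ i t) := by
      rw [← smul_neg, ← h1, inv_smul_smul₀ hρ.ne']
    rw [h2, norm_smul, norm_neg, norm_smul, Real.norm_of_nonneg (by positivity),
      Real.norm_of_nonneg (by positivity)]
    field_simp
  -- Jensen
  have hJ : ∀ i, f i ((1 / (t : ℝ)) • ∑ k ∈ Finset.range t, wt i k)
      ≤ (1 / (t : ℝ)) * ∑ k ∈ Finset.range t, f i (wt i k) := by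
    intro i
    have := (hf i).map_sum_le (t := Finset.range t) (w := fun _ => 1 / (t : ℝ))
      (p := fun k => wt i k) (fun _ _ => by positivity)
      (by simp [ht0.ne']) (fun _ _ => Set.mem_univ _)
    simpa only [← Finset.smul_sum, ← Finset.mul_sum, smul_eq_mul] using this
  have hfin := hacc (t - 1) (by omega)
  rw [Nat.sub_add_cancel ht] at hfin
  have hI2 : ∀ i, ∑ k ∈ Finset.Icc 1 t, R i k = ∑ k ∈ Finset.range t, R i (k + 1) :=
    fun i => hIccR (R i)
  change _ ≤ (1 / (t : ℝ)) * ∑ i, ∑ k ∈ Finset.Icc 1 t, R i k + _ + _ + _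
  simp only [htel, hI2]
  rw [Finset.sum_comm] at hfin
  have hA : ∑ i, (f i ((1 / (t : ℝ)) • ∑ k ∈ Finset.range t, wt i k) - f i wstar
            + β * (‖γ i t‖ / (ρ * t)))
      ≤ ∑ i, ((1 / (t : ℝ)) * ∑ k ∈ Finset.range t, (f i (wt i k) - f i wstar - R i (k + 1))
        + (1 / (t : ℝ)) * ∑ k ∈ Finset.range t, R i (k + 1)
        + (1 / (t : ℝ)) * (‖γ i t‖ ^ 2 / (2 * ρ)) + β ^ 2 / (2 * ρ * t)) := by
    refine Finset.sum_le_sum fun i _ => ?_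
    have h1 : (1 / (t : ℝ)) * ∑ k ∈ Finset.range t, (f i (wt i k) - f i wstar - R i (k + 1))
        = (1 / (t : ℝ)) * ∑ k ∈ Finset.range t, f i (wt i k) - f i wstar
          - (1 / (t : ℝ)) * ∑ k ∈ Finset.range t, R i (k + 1) := by
      simp only [Finset.sum_sub_distrib, Finset.sum_const, Finset.card_range, nsmul_eq_mul]
      field_simp
    have h2 : (1 / (t : ℝ)) * (‖γ i t‖ ^ 2 / (2 * ρ)) + β ^ 2 / (2 * ρ * t)
        - β * (‖γ i t‖ / (ρ * t)) = (‖γ i t‖ - β) ^ 2 / (2 * ρ * t) := by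
      field_simp
      ring
    have h3 : 0 ≤ (‖γ i t‖ - β) ^ 2 / (2 * ρ * t) := by positivity
    have := hJ i
    linarith
  refine hA.trans ?_
  simp only [Finset.sum_add_distrib, ← Finset.mul_sum, Finset.sum_const, Finset.card_univ,
    Fintype.card_fin, nsmul_eq_mul]
  have hB : ∑ i, ((c ^ 2 - ‖wt i t - wstar‖ ^ 2) / (2 * η i t) - ‖γ i t‖ ^ 2 / (2 * ρ))
      ≤ ∑ i, c ^ 2 / (2 * η i t) - ∑ i, ‖γ i t‖ ^ 2 / (2 * ρ) := by
    rw [← Finset.sum_sub_distrib]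
    refine Finset.sum_le_sum fun i _ => ?_
    have hη := hηpos i t ht le_rfl
    gcongr
    have := sq_nonneg ‖wt i t - wstar‖
    linarith
  have hC : (n : ℝ) * (ρ / 2 * (c_w ^ 2 - ‖w t - wstar‖ ^ 2)) ≤ n * (ρ / 2 * c_w ^ 2) := by
    gcongr
    have := sq_nonneg ‖w t - wstar‖
    linarith
  have hD := mul_le_mul_of_nonneg_left (hfin.trans (add_le_add hB hC))
    (by positivity : 0 ≤ 1 / (t : ℝ))
  have e1 : (n : ℝ) * ρ * c_w ^ 2 / (2 * (t : ℝ)) = 1 / (t : ℝ) * (n * (ρ / 2 * c_w ^ 2)) := by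
    field_simp
  have e2 : (n : ℝ) * (β ^ 2 / (2 * ρ * t)) = (n : ℝ) * β ^ 2 / (2 * ρ * (t : ℝ)) := by ring
  rw [e1, e2]
  rw [mul_add, mul_sub] at hD
  linarith
end

section
/- Single-iteration inequality of DP-ADMM for a convex smooth objective (full Lemma 3). Let E be a finite-dimensional real inner product space, n ≥ 1, ρ > 0, and L ≥ 0. For each i ∈ {1,…,n} let f_i : E → ℝ be convex and differentiable with L-Lipschitz gradient, let η_i > 0 satisfy 1/η_i > L, let w̃_i⁰, γ_i⁰, w⁰, ξ_i ∈ E. Define w̃_i¹ = (ρ + 1/η_i)⁻¹·(−∇f_i(w̃_i⁰) + γ_i⁰ + ρ·w⁰ + (1/η_i)·w̃_i⁰) + ξ_i, then w¹ = (1/n)·Σ_i w̃_i¹ − (1/(nρ))·Σ_i γ_i⁰, and γ_i¹ = γ_i⁰ − ρ·(w̃_i¹ − w¹). Then for all w_i, w, γ_i ∈ E: Σ_i [ f_i(w̃_i¹) − f_i(w_i) + ⟨−γ_i¹, w̃_i¹ − w_i⟩ + ⟨γ_i¹, w¹ − w⟩ + ⟨γ_i¹ − γ_i, w̃_i¹ −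 w¹⟩ ] ≤ Σ_i [ ((ρ + 1/η_i)²/(2·(1/η_i − L)))·‖ξ_i‖² − (ρ + 1/η_i)·⟨ξ_i, w_i − w̃_i⁰⟩ + (1/(2η_i))·(‖w_i − w̃_i⁰‖² − ‖w_i − w̃_i¹‖²) + (ρ/2)·(‖w_i − w⁰‖² − ‖w_i − w¹‖²) + (1/(2ρ))·(‖γ_i − γ_i⁰‖² − ‖γ_i − γ_i¹‖²) ]. -/
open scoped RealInnerProductSpace
open Finset

section helpers
variable {E : Type*} [NormedAddCommGroup E] [InnerProductSpace ℝ E] [FiniteDimensional ℝ E]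

lemma aux_line_deriv (f : E → ℝ) (hd : Differentiable ℝ f) (x d : E) (t : ℝ) :
    HasDerivAt (fun s : ℝ => f (x + s • d)) ⟪gradient f (x + t • d), d⟫ t := by
  have h1 : HasFDerivAt f (InnerProductSpace.toDual ℝ E (gradient f (x + t • d))) (x + t • d) :=
    (hd (x + t • d)).hasGradientAt.hasFDerivAt
  have h2 : HasDerivAt (fun s : ℝ => x + s • d) d t := by
    simpa using ((hasDerivAt_id t).smul_const d).const_add x
  have h3 := h1.comp_hasDerivAt t h2
  simpa [Function.comp_def] using h3

lemma aux_descent (f : E → ℝ) (hd : Differentiable ℝ f) (L : ℝ)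
    (hlip : ∀ x y : E, ‖gradient f x - gradient f y‖ ≤ L * ‖x - y‖) (x y : E) :
    f y ≤ f x + ⟪gradient f x, y - x⟫ + L / 2 * ‖y - x‖ ^ 2 := by
  set d := y - x with hdd
  let φ : ℝ → ℝ := fun t => f (x + t • d) - t * ⟪gradient f x, d⟫ - t ^ 2 * (L / 2 * ‖d‖ ^ 2)
  have hφ : ∀ t, HasDerivAt φ (⟪gradient f (x + t • d), d⟫ - ⟪gradient f x, d⟫
      - 2 * t * (L / 2 * ‖d‖ ^ 2)) t := by
    intro t
    have h1 := ((aux_line_deriv f hd x d t).sub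
      ((hasDerivAt_id t).mul_const ⟪gradient f x, d⟫)).sub
      (((hasDerivAt_id t).pow 2).mul_const (L / 2 * ‖d‖ ^ 2))
    refine HasDerivAt.congr_deriv (f := φ) h1 ?_
    simp only [id, one_mul]
    norm_num
  have hanti : AntitoneOn φ (Set.Icc 0 1) := by
    apply antitoneOn_of_deriv_nonpos (convex_Icc 0 1)
    · exact fun t _ => (hφ t).continuousAt.continuousWithinAt
    · exact fun t _ => (hφ t).differentiableAt.differentiableWithinAt
    · intro t ht
      rw [interior_Icc] at ht
      rw [(hφ t).deriv, ← inner_sub_left]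
      have h1 := real_inner_le_norm (gradient f (x + t • d) - gradient f x) d
      have h2 := hlip (x + t • d) x
      rw [add_sub_cancel_left, norm_smul, Real.norm_of_nonneg ht.1.le] at h2
      have h3 := mul_le_mul_of_nonneg_right h2 (norm_nonneg d)
      nlinarith
  have := hanti (Set.left_mem_Icc.2 zero_le_one) (Set.right_mem_Icc.2 zero_le_one) zero_le_one
  simp only [φ] at this
  have e : x + d = y := by rw [hdd]; abel
  simp only [one_smul, zero_smul, add_zero, e] at this
  linarith

lemma aux_convex (f : E → ℝ) (hd : Differentiable ℝ f) (hf : ConvexOn ℝ Set.univ f) (x u : E) :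
    f x + ⟪gradient f x, u - x⟫ ≤ f u := by
  have hc : ConvexOn ℝ Set.univ (fun s : ℝ => f (x + s • (u - x))) := by
    have := hf.comp_affineMap (AffineMap.lineMap x u : ℝ →ᵃ[ℝ] E)
    simpa [Function.comp_def, AffineMap.lineMap_apply, add_comm] using this
  have hD := aux_line_deriv f hd x (u - x) 0
  have := hc.le_slope_of_hasDerivAt (Set.mem_univ 0) (Set.mem_univ 1) zero_lt_one hD
  simp only [slope_def_field, one_smul, zero_smul, add_zero, sub_zero, div_one,
    add_sub_cancel] at this
  linarith

lemma aux_step (f : E → ℝ) (hd : Differentiable ℝ f) (hf : ConvexOn ℝ Set.univ f) (L ρ a : ℝ)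
    (hlip : ∀ x y : E, ‖gradient f x - gradient f y‖ ≤ L * ‖x - y‖)
    (hρ : 0 < ρ) (ha : 0 < a) (haL : L < a) (x0 x1 g0 g1 w0 w1 ξ u γ : E)
    (hx1 : x1 = (ρ + a)⁻¹ • (-(gradient f x0) + g0 + ρ • w0 + a • x0) + ξ)
    (hg1 : g1 = g0 - ρ • (x1 - w1)) :
    f x1 - f u + ⟪-g1, x1 - u⟫ + ⟪g1 - γ, x1 - w1⟫ ≤
      (ρ + a) ^ 2 / (2 * (a - L)) * ‖ξ‖ ^ 2 - (ρ + a) * ⟪ξ, u - x0⟫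
      + a / 2 * (‖u - x0‖ ^ 2 - ‖u - x1‖ ^ 2)
      + ρ / 2 * (‖u - w0‖ ^ 2 - ‖u - w1‖ ^ 2)
      + 1 / (2 * ρ) * (‖γ - g0‖ ^ 2 - ‖γ - g1‖ ^ 2) := by
  have h1 := aux_descent f hd L hlip x0 x1
  have h2 := aux_convex f hd hf x0 u
  have hne : ρ + a ≠ 0 := by positivity
  have hg : gradient f x0 = g1 + ρ • (w0 - w1) + a • (x0 - x1) + (ρ + a) • ξ := by
    have h : (ρ + a) • x1 = (-(gradient f x0) + g0 + ρ • w0 + a • x0) + (ρ + a) • ξ := by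
      conv_lhs => rw [hx1]
      rw [smul_add, smul_smul, mul_inv_cancel₀ hne, one_smul]
    have h' : gradient f x0 = g0 + ρ • w0 + a • x0 + (ρ + a) • ξ - (ρ + a) • x1 := by
      rw [h]; abel
    rw [h', hg1]; module
  have hA : f x1 - f u ≤ ⟪gradient f x0, x1 - u⟫ + L / 2 * ‖x1 - x0‖ ^ 2 := by
    have : ⟪gradient f x0, x1 - u⟫ = ⟪gradient f x0, x1 - x0⟫ - ⟪gradient f x0, u - x0⟫ := by
      rw [← inner_sub_right]; congr 1; abel
    linarith
  have hB : ⟪gradient f x0, x1 - u⟫ = ⟪g1, x1 - u⟫ + ρ * ⟪w0 - w1, x1 - u⟫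
      + a * ⟪x0 - x1, x1 - u⟫ + (ρ + a) * ⟪ξ, x1 - u⟫ := by
    rw [hg]; simp only [inner_add_left, real_inner_smul_left]
  have polar : ∀ p q r : E, ⟪p - q, q - r⟫
      = (‖r - p‖ ^ 2 - ‖r - q‖ ^ 2 - ‖p - q‖ ^ 2) / 2 := by
    intro p q r
    have : r - p = -((p - q) + (q - r)) := by abel
    rw [this, norm_neg, norm_add_sq_real, norm_sub_rev r q]; ring
  have hC : ⟪ξ, x1 - u⟫ = ⟪ξ, x1 - x0⟫ - ⟪ξ, u - x0⟫ := by
    rw [← inner_sub_right]; congr 1; abel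
  have hD : ⟪w0 - w1, x1 - u⟫ = ⟪w0 - w1, x1 - w1⟫ + ⟪w0 - w1, w1 - u⟫ := by
    rw [← inner_add_right]; congr 1; abel
  have hY1 : ⟪w0 - w1, x1 - w1⟫ ≤ ‖w0 - w1‖ ^ 2 / 2 + ‖x1 - w1‖ ^ 2 / 2 := by
    have := norm_sub_sq_real (w0 - w1) (x1 - w1)
    nlinarith [sq_nonneg ‖(w0 - w1) - (x1 - w1)‖]
  have hY2 : (ρ + a) * ⟪ξ, x1 - x0⟫ ≤ (ρ + a) ^ 2 / (2 * (a - L)) * ‖ξ‖ ^ 2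
      + (a - L) / 2 * ‖x1 - x0‖ ^ 2 := by
    have hp : 0 < a - L := by linarith
    have h := norm_sub_sq_real ((ρ + a) • ξ) ((a - L) • (x1 - x0))
    rw [norm_smul, norm_smul, real_inner_smul_left, real_inner_smul_right, mul_pow, mul_pow,
      Real.norm_eq_abs, Real.norm_eq_abs, sq_abs, sq_abs] at h
    have h0 := sq_nonneg ‖(ρ + a) • ξ - (a - L) • (x1 - x0)‖
    have e : (ρ + a) ^ 2 / (2 * (a - L)) * ‖ξ‖ ^ 2 + (a - L) / 2 * ‖x1 - x0‖ ^ 2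
        - (ρ + a) * ⟪ξ, x1 - x0⟫
        = ‖(ρ + a) • ξ - (a - L) • (x1 - x0)‖ ^ 2 / (2 * (a - L)) := by
      rw [h]; field_simp; ring
    have : 0 ≤ ‖(ρ + a) • ξ - (a - L) • (x1 - x0)‖ ^ 2 / (2 * (a - L)) := by positivity
    linarith
  have hG : ⟪g1 - γ, x1 - w1⟫ = 1 / (2 * ρ) * (‖γ - g0‖ ^ 2 - ‖γ - g1‖ ^ 2)
      - ρ / 2 * ‖x1 - w1‖ ^ 2 := by
    have e : g0 - g1 = ρ • (x1 - w1) := by rw [hg1]; abel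
    have h := polar g0 g1 γ
    rw [e, real_inner_smul_left, norm_smul, mul_pow, Real.norm_eq_abs, sq_abs,
      real_inner_comm] at h
    field_simp
    linarith
  have p1 := polar x0 x1 u
  have p2 := polar w0 w1 u
  rw [norm_sub_rev x0 x1] at p1
  rw [inner_neg_left]
  rw [hB, hC, hD, p1, p2] at hA
  have := mul_le_mul_of_nonneg_left hY1 hρ.le
  rw [hG]
  linarith

end helpers

/-- Single-iteration inequality of DP-ADMM for a convex smooth objective (full Lemma 3). -/
theorem dp_admm_one_step_smooth
    {E : Type*} [NormedAddCommGroup E] [InnerProductSpace ℝ E] [FiniteDimensional ℝ E]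
    (n : ℕ) (hn : 1 ≤ n) (ρ L : ℝ) (hρ : 0 < ρ) (hL : 0 ≤ L)
    (f : Fin n → E → ℝ) (hf : ∀ i, ConvexOn ℝ Set.univ (f i))
    (hdiff : ∀ i, Differentiable ℝ (f i))
    (hlip : ∀ i, ∀ x y : E, ‖gradient (f i) x - gradient (f i) y‖ ≤ L * ‖x - y‖)
    (η : Fin n → ℝ) (hη : ∀ i, 0 < η i) (hηL : ∀ i, L < 1 / η i)
    (wt0 γ0 : Fin n → E) (w0 : E) (ξ : Fin n → E)
    (wt1 : Fin n → E)
    (hwt1 : ∀ i, wt1 i = (ρ + 1 / η i)⁻¹ •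
      (-(gradient (f i) (wt0 i)) + γ0 i + ρ • w0 + (1 / η i) • wt0 i) + ξ i)
    (w1 : E)
    (hw1 : w1 = (1 / (n : ℝ)) • ∑ i, wt1 i - (1 / ((n : ℝ) * ρ)) • ∑ i, γ0 i)
    (γ1 : Fin n → E) (hγ1 : ∀ i, γ1 i = γ0 i - ρ • (wt1 i - w1)) :
    ∀ (wi : Fin n → E) (w : E) (γ : Fin n → E),
      ∑ i, (f i (wt1 i) - f i (wi i) + ⟪-(γ1 i), wt1 i - wi i⟫
            + ⟪γ1 i, w1 - w⟫ + ⟪γ1 i - γ i, wt1 i - w1⟫)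
      ≤ ∑ i, ((ρ + 1 / η i) ^ 2 / (2 * (1 / η i - L)) * ‖ξ i‖ ^ 2
            - (ρ + 1 / η i) * ⟪ξ i, wi i - wt0 i⟫
            + 1 / (2 * η i) * (‖wi i - wt0 i‖ ^ 2 - ‖wi i - wt1 i‖ ^ 2)
            + ρ / 2 * (‖wi i - w0‖ ^ 2 - ‖wi i - w1‖ ^ 2)
            + 1 / (2 * ρ) * (‖γ i - γ0 i‖ ^ 2 - ‖γ i - γ1 i‖ ^ 2)) := by
  intro wi w γ
  have hn' : (n : ℝ) ≠ 0 := by positivity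
  have hs : ∑ i, γ1 i = 0 := by
    simp only [hγ1, smul_sub, Finset.sum_sub_distrib, Finset.sum_const, Finset.card_univ,
      Fintype.card_fin, ← Finset.smul_sum]
    rw [← Nat.cast_smul_eq_nsmul ℝ, hw1, smul_sub, smul_sub, smul_smul, smul_smul, smul_smul,
      smul_smul]
    have e1 : (n : ℝ) * (ρ * (1 / (n : ℝ))) = ρ := by field_simp
    have e2 : (n : ℝ) * (ρ * (1 / ((n : ℝ) * ρ))) = 1 := by field_simp
    simp only [mul_assoc, e1, e2, one_smul]
    abel
  have hz : ∑ i, ⟪γ1 i, w1 - w⟫ = 0 := by rw [← sum_inner, hs, inner_zero_left]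
  have key := Finset.sum_le_sum (s := Finset.univ) fun i _ =>
    aux_step (f i) (hdiff i) (hf i) L ρ (1 / η i) (hlip i) hρ (one_div_pos.2 (hη i)) (hηL i)
      (wt0 i) (wt1 i) (γ0 i) (γ1 i) w0 w1 (ξ i) (wi i) (γ i) (hwt1 i) (hγ1 i)
  have e : ∀ i, 1 / (2 * η i) = 1 / η i / 2 := by
    intro i; rw [div_div, mul_comm]
  simp only [e]
  refine le_trans (le_of_eq ?_) key
  rw [← sub_eq_zero, ← Finset.sum_sub_distrib, ← hz]
  exact Finset.sum_congr rfl fun i _ => by ring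
end

section
/- Deterministic (pathwise) form of the convergence bound for DP-ADMM with convex smooth objectives (core of Theorem 3). Let E be a finite-dimensional real inner product space, n ≥ 1 and t ≥ 1 natural numbers, ρ > 0, L ≥ 0. For each i ∈ {1,…,n}: f_i : E → ℝ is convex and differentiable with L-Lipschitz gradient, and η_i^1 ≥ … ≥ η_i^t > 0 with 1/η_i^k > L for all k. Suppose given w̃_i^k (0 ≤ k ≤ t), w^k (0 ≤ k ≤ t), γ_i^k (0 ≤ k ≤ t), and ξ_i^k (1 ≤ k ≤ t) in E such that for every i and 1 ≤ k ≤ t: (i) w̃_i^k = (ρ + 1/η_i^k)⁻¹·(−∇f_i(w̃_i^{k−1}) + γ_i^{k−1} + ρ·w^{k−1} + (1/η_i^k)·w̃_i^{k−1}) + ξ_i^k; (ii) w^k = (1/n)·Σ_i w̃_i^k − (1/(nρ))·Σ_i γ_i^{k−1}; (iii) γ_i^k = γ_i^{k−1} − ρ·(w̃_i^k − w^k). Suppose γ_i^0 = 0 for all i, and that w* ∈ E and constants c, c_w ≥ 0 satisfy ‖w* − w̃_i^k‖ ≤ c for all i and 0 ≤ k ≤ t−1, and ‖w* − w^0‖ ≤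 c_w. Define w̄_i = (1/t)·Σ_{k=1}^{t} w̃_i^k and w̄ = (1/t)·Σ_{k=1}^{t} w^k. Then for every β ≥ 0: Σ_i ( f_i(w̄_i) − f_i(w*) + β·‖w̄_i − w̄‖ ) ≤ (1/t)·Σ_i Σ_{k=1}^{t} [ ((ρ + 1/η_i^k)²/(2·(1/η_i^k − L)))·‖ξ_i^k‖² − (ρ + 1/η_i^k)·⟨ξ_i^k, w* − w̃_i^{k−1}⟩ ] + (1/t)·Σ_i c²/(2·η_i^t) + n·ρ·c_w²/(2t) + n·β²/(2ρt). -/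
open scoped RealInnerProductSpace
open Finset

/-- First-order lower bound for a convex differentiable function. -/
lemma dp_admm_grad_ineq {E : Type*} [NormedAddCommGroup E] [InnerProductSpace ℝ E]
    [CompleteSpace E] (f : E → ℝ) (hf : ConvexOn ℝ Set.univ f) (hd : Differentiable ℝ f)
    (x z : E) : f x + ⟪gradient f x, z - x⟫ ≤ f z := by
  have hconv := hf.comp_affineMap (AffineMap.lineMap (k := ℝ) x z)
  have hder : HasDerivAt (f ∘ AffineMap.lineMap (k := ℝ) x z) ⟪gradient f x, z - x⟫ 0 := by
    have h1 : HasDerivAt (fun s : ℝ => AffineMap.lineMap (k := ℝ) x z s) (z - x) 0 :=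
      AffineMap.hasDerivAt_lineMap
    have h2 := (hd x).hasGradientAt.hasFDerivAt
    have h3 : HasFDerivAt f ((InnerProductSpace.toDual ℝ E) (gradient f x))
        (AffineMap.lineMap (k := ℝ) x z 0) := by simpa using h2
    simpa using h3.comp_hasDerivAt (0 : ℝ) h1
  have := hconv.le_slope_of_hasDerivAt (x := 0) (y := 1) (by simp) (by simp) one_pos hder
  simp only [slope_def_field, Function.comp_apply, AffineMap.lineMap_apply_zero,
    AffineMap.lineMap_apply_one, sub_zero, div_one] at this
  linarith

/-- Descent lemma. -/
lemma dp_admm_descent {E : Type*} [NormedAddCommGroup E] [InnerProductSpace ℝ E]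
    [CompleteSpace E] (f : E → ℝ) (hd : Differentiable ℝ f) (L : ℝ)
    (hlip : ∀ x y : E, ‖gradient f x - gradient f y‖ ≤ L * ‖x - y‖)
    (x y : E) : f y ≤ f x + ⟪gradient f x, y - x⟫ + L / 2 * ‖y - x‖ ^ 2 := by
  let φ : ℝ → ℝ := fun s => f (x + s • (y - x)) - s * ⟪gradient f x, y - x⟫
    - L / 2 * ‖y - x‖ ^ 2 * s ^ 2
  have hder : ∀ s, HasDerivAt φ (⟪gradient f (x + s • (y - x)), y - x⟫
      - ⟪gradient f x, y - x⟫ - L * ‖y - x‖ ^ 2 * s) s := by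
    intro s
    have h1 : HasDerivAt (fun s : ℝ => x + s • (y - x)) (y - x) s := by
      simpa using ((hasDerivAt_id s).smul_const (y - x)).const_add x
    have h2 := ((hd (x + s • (y - x))).hasGradientAt.hasFDerivAt).comp_hasDerivAt s h1
    have h3 := (h2.sub ((hasDerivAt_id s).mul_const ⟪gradient f x, y - x⟫)).sub
      (((hasDerivAt_id s).pow 2).const_mul (L / 2 * ‖y - x‖ ^ 2))
    refine h3.congr_deriv ?_
    simp
    ring
  have hanti : AntitoneOn φ (Set.Ici 0) := by
    apply antitoneOn_of_deriv_nonpos (convex_Ici 0)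
    · exact fun s _ => (hder s).continuousAt.continuousWithinAt
    · exact fun s _ => (hder s).differentiableAt.differentiableWithinAt
    · intro s hs
      rw [interior_Ici, Set.mem_Ioi] at hs
      rw [(hder s).deriv, ← inner_sub_left]
      have h1 := real_inner_le_norm (gradient f (x + s • (y - x)) - gradient f x) (y - x)
      have h2 := hlip (x + s • (y - x)) x
      rw [add_sub_cancel_left, norm_smul, Real.norm_of_nonneg hs.le] at h2
      have h3 := mul_le_mul_of_nonneg_right h2 (norm_nonneg (y - x))
      nlinarith
  have := hanti (a := 0) (b := 1) (by simp) (by simp) zero_le_one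
  simp only [φ, one_smul, zero_smul, add_zero, add_sub_cancel, one_mul, zero_mul, one_pow,
    mul_one, sub_zero, ne_eq, OfNat.ofNat_ne_zero, not_false_eq_true, zero_pow, mul_zero] at this
  linarith

/-- Algebraic core of the one-step inequality. -/
lemma dp_admm_alg {E : Type*} [NormedAddCommGroup E] [InnerProductSpace ℝ E]
    (A B C F q u ξ : E) (ρ a L : ℝ) (hρ : 0 < ρ) (ha : L < a) :
    ⟪q + ρ • C - a • A + (ρ + a) • ξ, B⟫ + L / 2 * ‖A‖ ^ 2 + ⟪u, F⟫
      ≤ ((ρ + a) ^ 2 / (2 * (a - L)) * ‖ξ‖ ^ 2 - (ρ + a) * ⟪ξ, A - B⟫)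
        + a / 2 * (‖A - B‖ ^ 2 - ‖B‖ ^ 2)
        + 1 / (2 * ρ) * (‖q + ρ • F + u‖ ^ 2 - ‖q + u‖ ^ 2)
        + ρ / 2 * (‖B - F + C‖ ^ 2 - ‖B - F‖ ^ 2) + ⟪q, B - F⟫ := by
  have haL : 0 < a - L := sub_pos.2 ha
  have h1 : 0 ≤ (a - L) / 2 * ‖A - ((ρ + a) / (a - L)) • ξ‖ ^ 2 := by positivity
  have h2 : 0 ≤ ρ / 2 * ‖C - F‖ ^ 2 := by positivity
  refine le_of_sub_nonneg (le_of_le_of_eq (add_nonneg h1 h2) ?_)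
  simp only [← real_inner_self_eq_norm_sq, inner_add_left, inner_add_right, inner_sub_left,
    inner_sub_right, real_inner_smul_left, real_inner_smul_right]
  rw [real_inner_comm A B, real_inner_comm A ξ, real_inner_comm B C, real_inner_comm B F,
    real_inner_comm C F, real_inner_comm F q, real_inner_comm F u, real_inner_comm q u]
  field_simp
  ring

/-- Telescoping with monotone weights. -/
lemma dp_admm_tele_mono (t : ℕ) (a D : ℕ → ℝ) (M : ℝ)
    (hD : ∀ k, k + 1 ≤ t → D k ≤ M) (ha : ∀ k, 1 ≤ k → k ≤ t → 0 ≤ a k)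
    (hmono : ∀ k, 1 ≤ k → k + 1 ≤ t → a k ≤ a (k + 1)) (s : ℕ) (hs : s + 1 ≤ t) :
    ∑ k ∈ Icc 1 (s + 1), a k * (D (k - 1) - D k) ≤ a (s + 1) * (M - D (s + 1)) := by
  induction s with
  | zero =>
    simp
    exact mul_le_mul_of_nonneg_left (by linarith [hD 0 hs]) (ha 1 le_rfl hs)
  | succ s ih =>
    rw [Finset.sum_Icc_succ_top (by omega)]
    have h1 := ih (by omega)
    have h2 := hmono (s + 1) (by omega) hs
    have h3 := hD (s + 1) hs
    simp only [Nat.add_sub_cancel]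
    nlinarith [mul_nonneg (sub_nonneg.2 h2) (sub_nonneg.2 h3)]

/-- Plain telescoping. -/
lemma dp_admm_tele (t : ℕ) (D : ℕ → ℝ) :
    ∑ k ∈ Icc 1 t, (D (k - 1) - D k) = D 0 - D t := by
  induction t with
  | zero => simp
  | succ s ih =>
    rw [Finset.sum_Icc_succ_top (by omega), ih]
    simp


/-- Deterministic (pathwise) form of the convergence bound for DP-ADMM with convex
smooth objectives (core of Theorem 3). -/
theorem dp_admm_convergence_smooth
    {E : Type*} [NormedAddCommGroup E] [InnerProductSpace ℝ E] [FiniteDimensional ℝ E]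
    (n t : ℕ) (hn : 1 ≤ n) (ht : 1 ≤ t) (ρ L : ℝ) (hρ : 0 < ρ) (hL : 0 ≤ L)
    (f : Fin n → E → ℝ) (hf : ∀ i, ConvexOn ℝ Set.univ (f i))
    (hdiff : ∀ i, Differentiable ℝ (f i))
    (hlip : ∀ i, ∀ x y : E, ‖gradient (f i) x - gradient (f i) y‖ ≤ L * ‖x - y‖)
    (η : Fin n → ℕ → ℝ)
    (hηpos : ∀ i k, 1 ≤ k → k ≤ t → 0 < η i k)
    (hηmono : ∀ i k, 1 ≤ k → k + 1 ≤ t → η i (k + 1) ≤ η i k)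
    (hηL : ∀ i k, 1 ≤ k → k ≤ t → L < 1 / η i k)
    (wt : Fin n → ℕ → E) (w : ℕ → E) (γ : Fin n → ℕ → E)
    (ξ : Fin n → ℕ → E)
    (hprimal : ∀ i k, 1 ≤ k → k ≤ t →
      wt i k = (ρ + 1 / η i k)⁻¹ •
        (-(gradient (f i) (wt i (k - 1))) + γ i (k - 1) + ρ • w (k - 1)
          + (1 / η i k) • wt i (k - 1)) + ξ i k)
    (hglobal : ∀ k, 1 ≤ k → k ≤ t →
      w k = (1 / (n : ℝ)) • ∑ i, wt i k - (1 / ((n : ℝ) * ρ)) • ∑ i, γ i (k - 1))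
    (hdual : ∀ i k, 1 ≤ k → k ≤ t → γ i k = γ i (k - 1) - ρ • (wt i k - w k))
    (hγ0 : ∀ i, γ i 0 = 0)
    (wstar : E) (c c_w : ℝ) (hc : 0 ≤ c) (hcw : 0 ≤ c_w)
    (hbound : ∀ i k, k ≤ t - 1 → ‖wstar - wt i k‖ ≤ c)
    (hw0 : ‖wstar - w 0‖ ≤ c_w) :
    ∀ β : ℝ, 0 ≤ β →
      ∑ i, (f i ((1 / (t : ℝ)) • ∑ k ∈ Finset.Icc 1 t, wt i k) - f i wstar
            + β * ‖(1 / (t : ℝ)) • ∑ k ∈ Finset.Icc 1 t, wt i k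
                    - (1 / (t : ℝ)) • ∑ k ∈ Finset.Icc 1 t, w k‖)
      ≤ (1 / (t : ℝ)) * ∑ i, ∑ k ∈ Finset.Icc 1 t,
            ((ρ + 1 / η i k) ^ 2 / (2 * (1 / η i k - L)) * ‖ξ i k‖ ^ 2
              - (ρ + 1 / η i k) * ⟪ξ i k, wstar - wt i (k - 1)⟫)
        + (1 / (t : ℝ)) * ∑ i, c ^ 2 / (2 * η i t)
        + (n : ℝ) * ρ * c_w ^ 2 / (2 * (t : ℝ))
        + (n : ℝ) * β ^ 2 / (2 * ρ * (t : ℝ)) := by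
  intro β hβ
  have htpos : (0 : ℝ) < t := by exact_mod_cast ht
  have hnpos : (0 : ℝ) < n := by exact_mod_cast hn
  -- dual variables sum to zero
  have hγsum : ∀ k, 1 ≤ k → k ≤ t → ∑ i, γ i k = 0 := by
    intro k hk hkt
    rw [Finset.sum_congr rfl (fun i _ => hdual i k hk hkt), Finset.sum_sub_distrib,
      ← Finset.smul_sum, Finset.sum_sub_distrib, Finset.sum_const, Finset.card_univ,
      Fintype.card_fin, hglobal k hk hkt, ← Nat.cast_smul_eq_nsmul ℝ,
      smul_sub (n : ℝ), smul_smul (n : ℝ), smul_smul (n : ℝ),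
      mul_one_div_cancel hnpos.ne', one_smul, sub_sub_cancel, smul_smul]
    have : ρ * ((n : ℝ) * (1 / ((n : ℝ) * ρ))) = 1 := by field_simp
    rw [this, one_smul, sub_self]
  -- directions
  have hu : ∀ i, ∃ u : E, ‖u‖ ^ 2 ≤ β ^ 2 ∧
      β * ‖(1 / (t : ℝ)) • ∑ k ∈ Finset.Icc 1 t, wt i k
                    - (1 / (t : ℝ)) • ∑ k ∈ Finset.Icc 1 t, w k‖
        = 1 / (t : ℝ) * ∑ k ∈ Finset.Icc 1 t, ⟪u, wt i k - w k⟫ := by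
    intro i
    set d := (1 / (t : ℝ)) • ∑ k ∈ Finset.Icc 1 t, wt i k
                    - (1 / (t : ℝ)) • ∑ k ∈ Finset.Icc 1 t, w k with hd
    refine ⟨(β * ‖d‖⁻¹) • d, ?_, ?_⟩
    · by_cases h0 : d = 0
      · simp [h0]; positivity
      · have : ‖d‖ ≠ 0 := norm_ne_zero_iff.2 h0
        rw [norm_smul, Real.norm_of_nonneg (by positivity), mul_assoc, inv_mul_cancel₀ this,
          mul_one]
    · rw [← inner_sum, ← real_inner_smul_right, Finset.sum_sub_distrib,
        smul_sub (1 / (t : ℝ)), ← hd,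
        real_inner_smul_left, real_inner_self_eq_norm_sq]
      by_cases h0 : ‖d‖ = 0
      · simp [h0]
      · field_simp
  choose u hunorm hueq using hu
  -- one-step inequality
  have hstep : ∀ i k, 1 ≤ k → k ≤ t →
      f i (wt i k) - f i wstar + ⟪u i, wt i k - w k⟫
      ≤ ((ρ + 1 / η i k) ^ 2 / (2 * (1 / η i k - L)) * ‖ξ i k‖ ^ 2
              - (ρ + 1 / η i k) * ⟪ξ i k, wstar - wt i (k - 1)⟫)
        + (1 / η i k) / 2 * (‖wstar - wt i (k - 1)‖ ^ 2 - ‖wstar - wt i k‖ ^ 2)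
        + 1 / (2 * ρ) * (‖γ i (k - 1) + u i‖ ^ 2 - ‖γ i k + u i‖ ^ 2)
        + ρ / 2 * (‖wstar - w (k - 1)‖ ^ 2 - ‖wstar - w k‖ ^ 2)
        + ⟪γ i k, w k - wstar⟫ := by
    intro i k hk hkt
    have hη := hηpos i k hk hkt
    have hsum : ρ + 1 / η i k ≠ 0 := by positivity
    have halg := dp_admm_alg (wt i k - wt i (k - 1)) (wt i k - wstar) (w (k - 1) - w k)
      (wt i k - w k) (γ i k) (u i) (ξ i k) ρ (1 / η i k) L hρ (hηL i k hk hkt)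
    have hg : gradient (f i) (wt i (k - 1)) = γ i k + ρ • (w (k - 1) - w k)
        - (1 / η i k) • (wt i k - wt i (k - 1)) + (ρ + 1 / η i k) • ξ i k := by
      have h := congrArg (fun v => (ρ + 1 / η i k) • v) (hprimal i k hk hkt)
      simp only [smul_add (ρ + 1 / η i k), smul_inv_smul₀ hsum] at h
      have h' : (ρ + 1 / η i k) • ξ i k = (ρ + 1 / η i k) • wt i k -
        (-(gradient (f i) (wt i (k - 1))) + γ i (k - 1) + ρ • w (k - 1)
          + (1 / η i k) • wt i (k - 1)) := by
        rw [h]; abel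
      rw [h', hdual i k hk hkt]
      module
    have e1 : wt i k - wt i (k - 1) - (wt i k - wstar) = wstar - wt i (k - 1) := by abel
    have e2 : γ i k + ρ • (wt i k - w k) = γ i (k - 1) := by rw [hdual i k hk hkt]; abel
    have e3 : wt i k - wstar - (wt i k - w k) + (w (k - 1) - w k) = w (k - 1) - wstar := by abel
    have e4 : wt i k - wstar - (wt i k - w k) = w k - wstar := by abel
    rw [← hg, e1, e2, e3, e4, norm_sub_rev (wt i k) wstar, norm_sub_rev (w k) wstar,
      norm_sub_rev (w (k - 1)) wstar] at halg
    have hdes := dp_admm_descent (f i) (hdiff i) L (hlip i) (wt i (k - 1)) (wt i k)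
    have hgr := dp_admm_grad_ineq (f i) (hf i) (hdiff i) (wt i (k - 1)) wstar
    have e5 : ⟪gradient (f i) (wt i (k - 1)), wt i k - wstar⟫
        = ⟪gradient (f i) (wt i (k - 1)), wt i k - wt i (k - 1)⟫
          - ⟪gradient (f i) (wt i (k - 1)), wstar - wt i (k - 1)⟫ := by
      rw [← inner_sub_right]; congr 1; abel
    linarith
  -- sum over k for each i
  have hsumk : ∀ i, ∑ k ∈ Finset.Icc 1 t, (f i (wt i k) - f i wstar + ⟪u i, wt i k - w k⟫)
      ≤ ∑ k ∈ Finset.Icc 1 t, ((ρ + 1 / η i k) ^ 2 / (2 * (1 / η i k - L)) * ‖ξ i k‖ ^ 2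
              - (ρ + 1 / η i k) * ⟪ξ i k, wstar - wt i (k - 1)⟫)
        + c ^ 2 / (2 * η i t) + β ^ 2 / (2 * ρ) + ρ * c_w ^ 2 / 2
        + ∑ k ∈ Finset.Icc 1 t, ⟪γ i k, w k - wstar⟫ := by
    intro i
    refine (Finset.sum_le_sum fun k hk => hstep i k (Finset.mem_Icc.1 hk).1
      (Finset.mem_Icc.1 hk).2).trans ?_
    simp only [Finset.sum_add_distrib, ← Finset.mul_sum]
    rw [dp_admm_tele t (fun k => ‖γ i k + u i‖ ^ 2), dp_admm_tele t (fun k => ‖wstar - w k‖ ^ 2)]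
    have h1 : ∑ k ∈ Icc 1 t, (1 / η i k) / 2 *
        (‖wstar - wt i (k - 1)‖ ^ 2 - ‖wstar - wt i k‖ ^ 2) ≤ c ^ 2 / (2 * η i t) := by
      have h := dp_admm_tele_mono t (fun k => (1 / η i k) / 2) (fun k => ‖wstar - wt i k‖ ^ 2)
        (c ^ 2)
        (fun k hk => pow_le_pow_left₀ (norm_nonneg _) (hbound i k (by omega)) 2)
        (fun k hk hkt => by have := hηpos i k hk hkt; positivity)
        (fun k hk hkt => by
          have h1 := hηpos i (k + 1) (by omega) hkt
          have h2 := one_div_le_one_div_of_le h1 (hηmono i k hk hkt)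
          linarith) (t - 1) (by omega)
      rw [Nat.sub_add_cancel ht] at h
      refine h.trans ?_
      have hη := hηpos i t ht le_rfl
      have e : c ^ 2 / (2 * η i t) = 1 / η i t / 2 * c ^ 2 := by field_simp
      rw [e]
      exact mul_le_mul_of_nonneg_left (by linarith [sq_nonneg ‖wstar - wt i t‖]) (by positivity)
    have h2 : 1 / (2 * ρ) * (‖γ i 0 + u i‖ ^ 2 - ‖γ i t + u i‖ ^ 2) ≤ β ^ 2 / (2 * ρ) := by
      rw [hγ0, zero_add, div_eq_mul_one_div (β ^ 2), mul_comm (β ^ 2)]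
      exact mul_le_mul_of_nonneg_left (by linarith [hunorm i, sq_nonneg ‖γ i t + u i‖])
        (by positivity)
    have h3 : ρ / 2 * (‖wstar - w 0‖ ^ 2 - ‖wstar - w t‖ ^ 2) ≤ ρ * c_w ^ 2 / 2 := by
      have h := pow_le_pow_left₀ (norm_nonneg _) hw0 2
      have : ρ * c_w ^ 2 / 2 = ρ / 2 * c_w ^ 2 := by ring
      rw [this]
      exact mul_le_mul_of_nonneg_left (by linarith [sq_nonneg ‖wstar - w t‖]) (by positivity)
    linarith
  have hzero : ∑ i, ∑ k ∈ Finset.Icc 1 t, ⟪γ i k, w k - wstar⟫ = 0 := by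
    rw [Finset.sum_comm]
    refine Finset.sum_eq_zero fun k hk => ?_
    rw [← sum_inner, hγsum k (Finset.mem_Icc.1 hk).1 (Finset.mem_Icc.1 hk).2, inner_zero_left]
  have hjen : ∀ i, f i ((1 / (t : ℝ)) • ∑ k ∈ Finset.Icc 1 t, wt i k) - f i wstar
            + β * ‖(1 / (t : ℝ)) • ∑ k ∈ Finset.Icc 1 t, wt i k
                    - (1 / (t : ℝ)) • ∑ k ∈ Finset.Icc 1 t, w k‖
      ≤ 1 / (t : ℝ) *
        ∑ k ∈ Finset.Icc 1 t, (f i (wt i k) - f i wstar + ⟪u i, wt i k - w k⟫) := by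
    intro i
    have h := (hf i).map_sum_le (t := Finset.Icc 1 t) (w := fun _ => 1 / (t : ℝ)) (p := wt i)
      (fun _ _ => by positivity) (by simp [htpos.ne']) (fun _ _ => Set.mem_univ _)
    simp only [← Finset.smul_sum, smul_eq_mul, ← Finset.mul_sum] at h
    rw [hueq, Finset.sum_add_distrib, Finset.sum_sub_distrib, Finset.sum_const, Nat.card_Icc,
      Nat.add_sub_cancel, nsmul_eq_mul, mul_add, mul_sub, ← mul_assoc _ (t : ℝ),
      one_div_mul_cancel htpos.ne', one_mul]
    linarith
  refine (Finset.sum_le_sum fun i _ => hjen i).trans ?_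
  rw [← Finset.mul_sum]
  have hfin := Finset.sum_le_sum fun i (_ : i ∈ (Finset.univ : Finset (Fin n))) => hsumk i
  simp only [Finset.sum_add_distrib] at hfin
  rw [hzero, Finset.sum_const, Finset.sum_const, Finset.card_univ, Fintype.card_fin,
    nsmul_eq_mul, nsmul_eq_mul] at hfin
  have hm := mul_le_mul_of_nonneg_left hfin (by positivity : (0 : ℝ) ≤ 1 / t)
  simp only [Finset.sum_add_distrib]
  refine hm.trans (le_of_eq ?_)
  field_simp
  ring
end

section
/- Prox-step optimality inequality with a Bregman divergence (Appendix Lemma). Let E be a finite-dimensional real inner product space, let Λ : E → ℝ be convex and differentiable, let h : E → ℝ be differentiable and strictly convex, let s ≥ 0 and y ∈ E, and define the Bregman divergence D(x, z) = h(x) − h(z) − ⟨∇h(z), x − z⟩. If x* minimizes x ↦ Λ(x) + s·D(x, y) over E, then for every x ∈ E: ⟨∇Λ(x*), x* − x⟩ ≤ s·( D(x, y) − D(x, x*) − D(x*, y) ). -/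
open scoped RealInnerProductSpace

/-- Prox-step optimality inequality with a Bregman divergence (Appendix Lemma). -/
theorem bregman_prox_optimality
    {E : Type*} [NormedAddCommGroup E] [InnerProductSpace ℝ E] [FiniteDimensional ℝ E]
    (Λ h : E → ℝ)
    (hΛconv : ConvexOn ℝ Set.univ Λ) (hΛdiff : Differentiable ℝ Λ)
    (hhdiff : Differentiable ℝ h) (hhsc : StrictConvexOn ℝ Set.univ h)
    (s : ℝ) (hs : 0 ≤ s) (y : E)
    (D : E → E → ℝ)
    (hD : ∀ x z : E, D x z = h x - h z - ⟪gradient h z, x - z⟫)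
    (xstar : E)
    (hmin : ∀ x : E, Λ xstar + s * D xstar y ≤ Λ x + s * D x y) :
    ∀ x : E, ⟪gradient Λ xstar, xstar - x⟫ ≤ s * (D x y - D x xstar - D xstar y) := by
  intro x
  have hL : HasFDerivAt Λ (innerSL ℝ (gradient Λ xstar)) xstar :=
    (hΛdiff xstar).hasGradientAt.hasFDerivAt
  have hH : HasFDerivAt h (innerSL ℝ (gradient h xstar)) xstar :=
    (hhdiff xstar).hasGradientAt.hasFDerivAt
  have hI : HasFDerivAt (fun x => innerSL ℝ (gradient h y) (x - y))
      (innerSL ℝ (gradient h y)) xstar :=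
    (innerSL ℝ (gradient h y)).hasFDerivAt.comp xstar ((hasFDerivAt_id xstar).sub_const y)
  have hF := hL.add (((hH.sub_const (h y)).sub hI).const_mul s)
  have hm : IsLocalMin (Λ + fun x => s * ((fun x => h x - h y) - fun x =>
      innerSL ℝ (gradient h y) (x - y)) x) xstar := by
    refine Filter.Eventually.of_forall fun z => ?_
    have := hmin z
    rw [hD, hD] at this
    simpa using this
  have h0 := congrArg (fun f => f (x - xstar)) (hm.hasFDerivAt_eq_zero hF)
  simp [inner_sub_right] at h0
  rw [hD, hD, hD]
  simp [inner_sub_right]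
  linarith
end

section
/- Per-agent single-iteration inequality for a convex non-smooth objective (inequality (36) in the proof of Lemma 2). Let E be a real inner product space, f : E → ℝ convex, ρ > 0, η > 0, and let w̃₀, w̄₀, γ₀, ξ ∈ E. Let g ∈ E be a subgradient of f at w̃₀ (f(z) ≥ f(w̃₀) + ⟨g, z − w̃₀⟩ for all z ∈ E). Define w̃₁ = (ρ + 1/η)⁻¹·(−g + γ₀ + ρ·w̄₀ + (1/η)·w̃₀) + ξ, let w̄₁ ∈ E be arbitrary, and set γ₁ = γ₀ − ρ·(w̃₁ − w̄₁). Then for every w ∈ E: f(w̃₀) − f(w) + ⟨w̃₁ − w, −γ₁⟩ ≤ (η/2)·‖g − (ρ + 1/η)·ξ‖² − (ρ + 1/η)·⟨ξ, w − w̃₀⟩ + (1/(2η))·(‖w − w̃₀‖² − ‖w − w̃₁‖²) + (ρ/2)·(‖w − w̄₀‖² − ‖w − w̄₁‖²) + (1/(2ρ))·‖γ₁ − γ₀‖². -/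
open scoped RealInnerProductSpace

/-- Per-agent single-iteration inequality for a convex non-smooth objective
(inequality (36) in the proof of Lemma 2). -/
theorem dp_admm_per_agent_nonsmooth
    {E : Type*} [NormedAddCommGroup E] [InnerProductSpace ℝ E]
    (f : E → ℝ) (hf : ConvexOn ℝ Set.univ f)
    (ρ η : ℝ) (hρ : 0 < ρ) (hη : 0 < η)
    (wt0 wbar0 γ0 ξ g : E)
    (hg : ∀ z : E, f z ≥ f wt0 + ⟪g, z - wt0⟫)
    (wt1 : E)
    (hwt1 : wt1 = (ρ + 1 / η)⁻¹ • (-g + γ0 + ρ • wbar0 + (1 / η) • wt0) + ξ)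
    (wbar1 : E) (γ1 : E) (hγ1 : γ1 = γ0 - ρ • (wt1 - wbar1)) :
    ∀ w : E,
      f wt0 - f w + ⟪wt1 - w, -γ1⟫ ≤
        η / 2 * ‖g - (ρ + 1 / η) • ξ‖ ^ 2 - (ρ + 1 / η) * ⟪ξ, w - wt0⟫
        + 1 / (2 * η) * (‖w - wt0‖ ^ 2 - ‖w - wt1‖ ^ 2)
        + ρ / 2 * (‖w - wbar0‖ ^ 2 - ‖w - wbar1‖ ^ 2)
        + 1 / (2 * ρ) * ‖γ1 - γ0‖ ^ 2 := by
  intro w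
  have hsub := hg w
  have hc : ρ + 1 / η ≠ 0 := by positivity
  -- solve the primal update for `γ0`
  have hγ0 : γ0 = g - (ρ + 1 / η) • ξ + ρ • (wt1 - wbar0) + (1 / η) • (wt1 - wt0) := by
    have h : (ρ + 1 / η) • (wt1 - ξ) = -g + γ0 + ρ • wbar0 + (1 / η) • wt0 := by
      rw [hwt1, add_sub_cancel_right, smul_smul, mul_inv_cancel₀ hc, one_smul]
    have h2 : γ0 = (ρ + 1 / η) • (wt1 - ξ) + g - ρ • wbar0 - (1 / η) • wt0 := by
      rw [h]; abel
    rw [h2]; module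
  obtain ⟨G, hG⟩ : ∃ G, G = g - (ρ + 1 / η) • ξ := ⟨_, rfl⟩
  have hgG : g = G + (ρ + 1 / η) • ξ := by rw [hG]; abel
  have hγ1_eq : γ1 = G + ρ • (wbar1 - wbar0) + (1 / η) • (wt1 - wt0) := by
    rw [hγ1, hγ0, ← hG]; module
  have hd : γ1 - γ0 = -(ρ • (wt1 - wbar1)) := by rw [hγ1]; abel
  have hn : 1 / (2 * ρ) * ‖γ1 - γ0‖ ^ 2 = ρ / 2 * ‖wt1 - wbar1‖ ^ 2 := by
    rw [hd, norm_neg, norm_smul, Real.norm_of_nonneg hρ.le]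
    field_simp
  -- Young inequality
  have hY : 0 ≤ η / 2 * ‖G‖ ^ 2 + ⟪G, wt1 - wt0⟫ + 1 / (2 * η) * ‖wt1 - wt0‖ ^ 2 := by
    have h0 : 0 ≤ η / 2 * ‖G + (1 / η) • (wt1 - wt0)‖ ^ 2 := by positivity
    rw [norm_add_sq_real, inner_smul_right, norm_smul,
      Real.norm_of_nonneg (by positivity : 0 ≤ 1 / η)] at h0
    convert h0 using 1
    field_simp
  have hs : 0 ≤ ρ / 2 * ‖wt1 - wbar0‖ ^ 2 := by positivity
  have e1 : ⟪g, w - wt0⟫ = ⟪G, w - wt0⟫ + (ρ + 1 / η) * ⟪ξ, w - wt0⟫ := by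
    rw [hgG, inner_add_left, real_inner_smul_left]
  have e2 : ⟪wt1 - w, -γ1⟫ = -⟪G, wt1 - w⟫ - ρ * ⟪wt1 - w, wbar1 - wbar0⟫
      - 1 / η * ⟪wt1 - w, wt1 - wt0⟫ := by
    rw [hγ1_eq, inner_neg_right, inner_add_right, inner_add_right, real_inner_smul_right,
      real_inner_smul_right, real_inner_comm]
    ring
  have e3 : ⟪G, wt1 - wt0⟫ = ⟪G, wt1 - w⟫ + ⟪G, w - wt0⟫ := by
    rw [← inner_add_right]; congr 1; abel
  have e4 : ‖w - wt0‖ ^ 2 - ‖w - wt1‖ ^ 2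
      = ‖wt1 - wt0‖ ^ 2 - 2 * ⟪wt1 - w, wt1 - wt0⟫ := by
    have : w - wt0 = (wt1 - wt0) - (wt1 - w) := by abel
    rw [this, norm_sub_sq_real, norm_sub_rev w wt1, real_inner_comm]
    ring
  have e5 : ‖w - wbar0‖ ^ 2 - ‖w - wbar1‖ ^ 2
      = ‖wt1 - wbar0‖ ^ 2 - ‖wt1 - wbar1‖ ^ 2 - 2 * ⟪wt1 - w, wbar1 - wbar0⟫ := by
    have h0 : w - wbar0 = (wt1 - wbar0) - (wt1 - w) := by abel
    have h1 : w - wbar1 = (wt1 - wbar1) - (wt1 - w) := by abel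
    have h2 : wbar1 - wbar0 = (wt1 - wbar0) - (wt1 - wbar1) := by abel
    rw [h0, h1, h2, norm_sub_sq_real (wt1 - wbar0) (wt1 - w),
      norm_sub_sq_real (wt1 - wbar1) (wt1 - w), inner_sub_right (wt1 - w),
      real_inner_comm (wt1 - w) (wt1 - wbar0), real_inner_comm (wt1 - w) (wt1 - wbar1)]
    ring
  have ha : 1 / (2 * η) = 1 / η / 2 := by field_simp
  rw [hn, ← hG, e2, e4, e5, ha]
  rw [ha, e3] at hY
  rw [e1] at hsub
  linarith
end

section
/- Second numerical inequality in the proof of Theorem 1. For every δ with 0 < δ ≤ 1/100 and every ε with 0 < ε ≤ 1, writing L = ln(1.25/δ), one has −(4L − ε)²/(8L) < ln(√(2π)·δ/2). -/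
/-- Second numerical inequality in the proof of Theorem 1. -/
theorem gaussian_tail_exponent_bound
    (δ ε : ℝ) (hδ : 0 < δ) (hδ1 : δ ≤ 1 / 100) (hε : 0 < ε) (hε1 : ε ≤ 1)
    (L : ℝ) (hL : L = Real.log (1.25 / δ)) :
    -(4 * L - ε) ^ 2 / (8 * L) < Real.log (Real.sqrt (2 * Real.pi) * δ / 2) := by
  have hL1 : 1 < L := by
    rw [hL, Real.lt_log_iff_exp_lt (by positivity), lt_div_iff₀ hδ]
    nlinarith [Real.exp_one_lt_three, Real.exp_pos 1]
  have hs : 2 < Real.sqrt (2 * Real.pi) := by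
    apply Real.lt_sqrt_of_sq_lt
    nlinarith [Real.pi_gt_three]
  have hR : -L < Real.log (Real.sqrt (2 * Real.pi) * δ / 2) := by
    rw [hL, ← Real.log_inv]
    apply Real.log_lt_log (by positivity)
    rw [inv_div, div_lt_iff₀ (by norm_num)]
    nlinarith
  refine lt_of_le_of_lt ?_ hR
  rw [div_le_iff₀ (by positivity)]
  nlinarith [sq_nonneg ε, mul_pos (lt_trans one_pos hL1) hε]
end

section
/- Tail probability bound for the DP-ADMM noise (conclusion of the tail estimate in the proof of Theorem 1). Let ε ∈ (0,1], δ ∈ (0, 1/100], c₁ > 0, ρ > 0, η > 0, and let m be a positive natural number. Write L = ln(1.25/δ), set σ = 2·c₁·√(2L)/(m·ε·(ρ + 1/η)) and r = (4L·c₁/ε − c₁)/(m·(ρ + 1/η)). Then (gaussianReal 0 σ²)({x : x > r}) < δ/2. -/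
open ProbabilityTheory MeasureTheory

lemma gauss_tail_aux (σ t : ℝ) (hσ : 0 < σ) (ht : 0 < t) :
    ∫ x in {x : ℝ | x > t * σ}, gaussianPDFReal 0 ⟨σ ^ 2, sq_nonneg σ⟩ x
      ≤ Real.exp (-(t ^ 2 / 2)) / (t * Real.sqrt (2 * Real.pi)) := by
  have hp := Real.pi_pos
  have hs : 0 < Real.sqrt (2 * Real.pi) := Real.sqrt_pos.mpr (by positivity)
  have ha : -(t / σ) < 0 := by
    have : 0 < t / σ := by positivity
    linarith
  have hset : {x : ℝ | x > t * σ} = Set.Ioi (t * σ) := rfl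
  have hI := integrableOn_exp_mul_Ioi ha (t * σ)
  have hval := integral_exp_mul_Ioi ha (t * σ)
  rw [hset]
  have hsq : Real.sqrt (2 * Real.pi * σ ^ 2) = Real.sqrt (2 * Real.pi) * σ := by
    rw [Real.sqrt_mul (by positivity), Real.sqrt_sq hσ.le]
  calc ∫ x in Set.Ioi (t * σ), gaussianPDFReal 0 ⟨σ ^ 2, sq_nonneg σ⟩ x
      ≤ ∫ x in Set.Ioi (t * σ), ((Real.sqrt (2 * Real.pi) * σ)⁻¹ * Real.exp (t ^ 2 / 2))
          * Real.exp (-(t / σ) * x) := by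
        apply setIntegral_mono_on (integrable_gaussianPDFReal _ _).integrableOn
          (hI.const_mul _) measurableSet_Ioi
        intro x _
        have hdef : gaussianPDFReal 0 ⟨σ ^ 2, sq_nonneg σ⟩ x
            = (Real.sqrt (2 * Real.pi * σ ^ 2))⁻¹ * Real.exp (-(x - 0) ^ 2 / (2 * σ ^ 2)) := rfl
        refine hdef.trans_le ?_
        rw [sub_zero, hsq, mul_assoc, ← Real.exp_add]
        apply mul_le_mul_of_nonneg_left _ (by positivity)
        apply Real.exp_le_exp.mpr
        have h : t ^ 2 / 2 + -(t / σ) * x - -x ^ 2 / (2 * σ ^ 2) = (x / σ - t) ^ 2 / 2 := by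
          field_simp
          ring
        have := sq_nonneg (x / σ - t)
        linarith
    _ = _ := by
        rw [integral_const_mul, hval]
        have h1 : -(t / σ) * (t * σ) = -(t ^ 2 / 2) + -(t ^ 2 / 2) := by
          field_simp
          ring
        rw [h1, Real.exp_add, Real.exp_neg]
        have := Real.exp_pos (t ^ 2 / 2)
        field_simp

/-- Tail probability bound for the DP-ADMM noise (conclusion of the tail estimate
in the proof of Theorem 1). -/
theorem dp_admm_noise_tail_bound
    (ε δ c₁ ρ η : ℝ) (hε : 0 < ε) (hε1 : ε ≤ 1) (hδ : 0 < δ) (hδ1 : δ ≤ 1 / 100)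
    (hc₁ : 0 < c₁) (hρ : 0 < ρ) (hη : 0 < η) (m : ℕ) (hm : 0 < m)
    (L σ r : ℝ) (hL : L = Real.log (1.25 / δ))
    (hσ : σ = 2 * c₁ * Real.sqrt (2 * L) / ((m : ℝ) * ε * (ρ + 1 / η)))
    (hr : r = (4 * L * c₁ / ε - c₁) / ((m : ℝ) * (ρ + 1 / η))) :
    gaussianReal 0 ⟨σ ^ 2, sq_nonneg σ⟩ {x : ℝ | x > r} < ENNReal.ofReal (δ / 2) := by
  have hm' : (0 : ℝ) < m := by exact_mod_cast hm
  have he1 := Real.exp_one_lt_d9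
  have he0 := Real.exp_pos 1
  have hL4 : 4 ≤ L := by
    rw [hL, Real.le_log_iff_exp_le (by positivity)]
    have h4 : Real.exp 4 = Real.exp 1 ^ 4 := by
      rw [← Real.exp_nat_mul]; norm_num
    have h5 : Real.exp 1 ^ 4 ≤ 3 ^ 4 := by
      apply pow_le_pow_left₀ he0.le
      linarith
    have h6 : (125 : ℝ) ≤ 1.25 / δ := by
      rw [le_div_iff₀ hδ]; linarith
    rw [h4]; linarith
  have hexpL : Real.exp (-L) = δ / 1.25 := by
    rw [Real.exp_neg, hL, Real.exp_log (by positivity), inv_div]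
  obtain ⟨s, hs⟩ : ∃ s, s = Real.sqrt (2 * L) := ⟨_, rfl⟩
  have hs2 : s ^ 2 = 2 * L := by rw [hs]; exact Real.sq_sqrt (by linarith)
  have hs3 : 5 / 2 ≤ s := by
    rw [hs]; apply Real.le_sqrt_of_sq_le; linarith
  have hA : 0 < ρ + 1 / η := by positivity
  obtain ⟨A, hAe⟩ : ∃ A, A = ρ + 1 / η := ⟨_, rfl⟩
  rw [← hAe] at hσ hr hA
  rw [← hs] at hσ
  have hs0 : 0 < s := by linarith
  have hσ0 : 0 < σ := by rw [hσ]; positivity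
  obtain ⟨t, ht⟩ : ∃ t, t = s - ε / (2 * s) := ⟨_, rfl⟩
  have hrt : r = t * σ := by
    have : L = s ^ 2 / 2 := by linarith
    rw [hr, hσ, ht, this]
    field_simp
    ring
  have hq : ε / (2 * s) ≤ 1 / 2 := by
    rw [div_le_iff₀ (by positivity)]; linarith
  have ht2 : 2 ≤ t := by linarith
  have htsq : -(t ^ 2 / 2) ≤ -L + 1 / 2 := by
    have : t ^ 2 = s ^ 2 - ε + (ε / (2 * s)) ^ 2 := by
      rw [ht]; field_simp; ring
    have := sq_nonneg (ε / (2 * s))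
    linarith
  have hhalf : Real.exp (1 / 2) ≤ 2 := by
    have h : Real.exp (1 / 2) ^ 2 = Real.exp 1 := by
      rw [← Real.exp_nat_mul]; norm_num
    have := Real.exp_pos (1 / 2)
    nlinarith
  have hexp : Real.exp (-(t ^ 2 / 2)) ≤ δ / 1.25 * 2 := by
    refine (Real.exp_le_exp.mpr htsq).trans ?_
    rw [Real.exp_add, hexpL]
    exact mul_le_mul_of_nonneg_left hhalf (by positivity)
  have hpi : 2 ≤ Real.sqrt (2 * Real.pi) := by
    apply Real.le_sqrt_of_sq_le
    linarith [Real.pi_gt_three]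
  have hv : (⟨σ ^ 2, sq_nonneg σ⟩ : NNReal) ≠ 0 := by
    intro h
    have h' := congrArg NNReal.toReal h
    have : σ ^ 2 = 0 := h'
    have : 0 < σ ^ 2 := by positivity
    linarith
  rw [gaussianReal_apply_eq_integral 0 hv, hrt]
  rw [ENNReal.ofReal_lt_ofReal_iff (by positivity)]
  refine (gauss_tail_aux σ t hσ0 (by linarith)).trans_lt ?_
  have hd : 4 ≤ t * Real.sqrt (2 * Real.pi) := by nlinarith
  rw [div_lt_iff₀ (by linarith)]
  have : δ / 2 * 4 ≤ δ / 2 * (t * Real.sqrt (2 * Real.pi)) :=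
    mul_le_mul_of_nonneg_left hd (by positivity)
  have h8 : δ / 1.25 * 2 = δ * 1.6 := by ring
  linarith
end
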